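/- arXiv:2206.14758 — 3 statements merged into one kernel-verified Lean document; each statement's English description precedes it below -/
import Mathlib

section
/- Suppose Φ : 𝔻ⁿ → 𝔻ⁿ is holomorphic and C¹-smooth on the closed polydisc, and satisfies the rank condition (†): for every nonempty subset I ⊆ {1,…,n} of cardinality q and every ζ ∈ 𝕋ⁿ with Φ_I(ζ) ∈ 𝕋^q, the complex derivative d_ζΦ_I has rank q. Then there exists a constant C > 0 such that for every β ∈ (-1, 0) and every holomorphic f : 𝔻ⁿ → ℂ: ∫_{𝔻ⁿ} |f∘Φ|² dV_β ≤ C·∫_{𝔻ⁿ} |f|² dV_β (i.e., the composition operator C_Φ is bounded on A²_β(𝔻ⁿ) with norm bounded uniformly in β ∈ (-1,0)). -/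
open MeasureTheory Metric Set ENNReal

noncomputable section

/-- The open unit polydisc in `ℂⁿ`. -/
def polydisc (n : ℕ) : Set (Fin n → ℂ) := {z | ∀ j, ‖z j‖ < 1}

/-- The closed unit polydisc in `ℂⁿ`. -/
def closedPolydisc (n : ℕ) : Set (Fin n → ℂ) := {z | ∀ j, ‖z j‖ ≤ 1}

/-- The distinguished boundary (torus) of the polydisc. -/
def torus (n : ℕ) : Set (Fin n → ℂ) := {z | ∀ j, ‖z j‖ = 1}

/-- The weighted Bergman measure `V_β` on the polydisc: the product of the measures
`dA_β(z) = (β+1)(1-|z|²)^β dA(z)`, where `dA` is normalized area measure on the unit disc. -/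
def Vbeta (n : ℕ) (β : ℝ) : Measure (Fin n → ℂ) :=
  (volume.restrict (polydisc n)).withDensity
    (fun z => ENNReal.ofReal (∏ j, ((β + 1) * (1 - ‖z j‖ ^ 2) ^ β / Real.pi)))

/-- The `(i,j)` entry `∂Φ_i/∂z_j(ζ)` of the complex Jacobian matrix of `Φ` at `ζ`
(computed via the derivative of the extension to the closed polydisc). -/
def jacEntry (n : ℕ) (Φ : (Fin n → ℂ) → (Fin n → ℂ)) (ζ : Fin n → ℂ) (i j : Fin n) : ℂ :=
  fderivWithin ℝ Φ (closedPolydisc n) ζ (Pi.single j 1) i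

/-- The rank condition (†): for every nonempty `I ⊆ {1,…,n}` of cardinality `q` and
every `ζ ∈ 𝕋ⁿ` with `Φ_I(ζ) ∈ 𝕋^q`, the Jacobian `d_ζΦ_I` has rank `q`. -/
def rankCond (n : ℕ) (Φ : (Fin n → ℂ) → (Fin n → ℂ)) : Prop :=
  ∀ I : Finset (Fin n), I.Nonempty → ∀ ζ ∈ torus n, (∀ i ∈ I, ‖Φ ζ i‖ = 1) →
    Matrix.rank (Matrix.of fun (i : I) (j : Fin n) => jacEntry n Φ ζ i j) = I.card

/-!
In logarithmic coordinates `z j = exp (l j)` near a point of the torus, `log |Φ i|` attains its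
maximum over the half-planes `re (l j) ≤ 0` at every point of the torus where `|Φ i| = 1`. Hence the
rows of the logarithmic Jacobian of `Φ` belonging to such coordinates `i` are real and nonnegative,
and by (†) they are linearly independent. Completed to an invertible real matrix `B`, they admit a
permutation `σ` with `B i (σ i) ≠ 0` for all `i`. Two things follow on a small piece of the torus of
polyradius `r` close to `1`: the arguments of `Φ` depend bi-Lipschitz-continuously on the angles,
and `Φ i` lies in a Stolz region with vertex on the circle of radius `1 - c * (1 - r (σ i))`.

So `|f ∘ Φ|` is dominated by a nontangential maximal function of `f` on the torus with these
radii, which is bounded on `L²` by applying, one variable at a time, a `TT*` argument to a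
linearized maximal operator. By compactness finitely many pieces suffice, and the `L²` means of
`f ∘ Φ` over the torus of polyradius `r` are bounded by those of rotations of `f` over tori whose
gaps to the unit torus are permuted and contracted by constants. Only the radial integration
involves the weight: for `β ≤ 0` it increases towards the torus and is invariant under
permutations, so it is not decreased by such a change of radii, and the constants do not depend
on `β`.
-/

section KernelOperators

variable {α : Type*} [MeasurableSpace α] {ν : Measure α}

lemma sq_lintegral_mul_le {f g : α → ℝ≥0∞} (hf : Measurable f) (hg : Measurable g) :
    (∫⁻ x, f x * g x ∂ν) ^ 2 ≤ (∫⁻ x, f x ^ 2 ∂ν) * ∫⁻ x, g x ^ 2 ∂ν := by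
  have hölder := ENNReal.lintegral_mul_le_Lp_mul_Lq ν (p := 2) (q := 2)
    Real.HolderConjugate.two_two hf.aemeasurable hg.aemeasurable
  refine (by simpa using pow_le_pow_left₀ zero_le hölder 2 : _ ≤ _).trans_eq ?_
  rw [mul_pow, ← ENNReal.rpow_natCast, ← ENNReal.rpow_natCast, ← ENNReal.rpow_mul,
    ← ENNReal.rpow_mul]
  norm_num

/-- The integral operator with nonnegative kernel `k`. Its adjoint is `kernelOp ν (flip k)`. -/
def kernelOp (ν : Measure α) (k : α → α → ℝ≥0∞) (f : α → ℝ≥0∞) (x : α) : ℝ≥0∞ :=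
  ∫⁻ y, k x y * f y ∂ν

variable {k l : α → α → ℝ≥0∞} {f g : α → ℝ≥0∞}

lemma kernelOp_mono (h : ∀ x y, k x y ≤ l x y) (x : α) : kernelOp ν k f x ≤ kernelOp ν l f x :=
  lintegral_mono fun y => mul_le_mul_left (h x y) (f y)

lemma measurable_kernelOp [SFinite ν] (hk : Measurable (Function.uncurry k)) (hf : Measurable f) :
    Measurable (kernelOp ν k f) :=
  (hk.mul (hf.comp measurable_snd)).lintegral_prod_right'

lemma lintegral_mul_kernelOp [SFinite ν] (hk : Measurable (Function.uncurry k))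
    (hf : Measurable f) (hg : Measurable g) :
    ∫⁻ x, g x * kernelOp ν k f x ∂ν = ∫⁻ y, f y * kernelOp ν (flip k) g y ∂ν := by
  calc ∫⁻ x, g x * kernelOp ν k f x ∂ν
      = ∫⁻ x, ∫⁻ y, g x * (k x y * f y) ∂ν ∂ν :=
        lintegral_congr fun x => (lintegral_const_mul _ (hk.of_uncurry_left.mul hf)).symm
    _ = ∫⁻ y, ∫⁻ x, g x * (k x y * f y) ∂ν ∂ν :=
        lintegral_lintegral_swap
          ((hg.comp measurable_fst).mul (hk.mul (hf.comp measurable_snd))).aemeasurable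
    _ = ∫⁻ y, ∫⁻ x, f y * (k x y * g x) ∂ν ∂ν := by
        simp only [mul_left_comm, mul_comm]
    _ = ∫⁻ y, f y * kernelOp ν (flip k) g y ∂ν :=
        lintegral_congr fun y => lintegral_const_mul _ (hk.of_uncurry_right.mul hg)

lemma kernelOp_kernelOp [SFinite ν] (hk : Measurable (Function.uncurry k))
    (hl : Measurable (Function.uncurry l)) (hf : Measurable f) (x : α) :
    kernelOp ν k (kernelOp ν l f) x = kernelOp ν (fun x z => ∫⁻ y, k x y * l y z ∂ν) f x := by
  have hkx : Measurable (k x) := hk.of_uncurry_left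
  calc ∫⁻ y, k x y * ∫⁻ z, l y z * f z ∂ν ∂ν
      = ∫⁻ y, ∫⁻ z, k x y * (l y z * f z) ∂ν ∂ν :=
        lintegral_congr fun y => (lintegral_const_mul _ (hl.of_uncurry_left.mul hf)).symm
    _ = ∫⁻ z, ∫⁻ y, k x y * (l y z * f z) ∂ν ∂ν :=
        lintegral_lintegral_swap
          ((hkx.comp measurable_fst).mul (hl.mul (hf.comp measurable_snd))).aemeasurable
    _ = ∫⁻ z, (∫⁻ y, k x y * l y z ∂ν) * f z ∂ν := by
        refine lintegral_congr fun z => ?_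
        simp_rw [← mul_assoc]
        exact lintegral_mul_const _ (hkx.mul hl.of_uncurry_right)

lemma lintegral_sq_kernelOp_flip_le [SFinite ν] {C : ℝ≥0∞} (hk : Measurable (Function.uncurry k))
    (hC : ∀ x x', ∫⁻ y, k x y * k x' y ∂ν ≤ C * (k x x' + k x' x)) (hg : Measurable g) :
    ∫⁻ y, kernelOp ν (flip k) g y ^ 2 ∂ν ≤ 2 * C * ∫⁻ x, g x * kernelOp ν k g x ∂ν := by
  have hk' : Measurable (Function.uncurry (flip k)) := hk.comp measurable_swap
  have hT : Measurable (kernelOp ν k g) := measurable_kernelOp hk hg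
  have hT' : Measurable (kernelOp ν (flip k) g) := measurable_kernelOp hk' hg
  have kernelOp_add (x : α) : kernelOp ν (fun x x' => C * (k x x' + k x' x)) g x =
      C * (kernelOp ν k g x + kernelOp ν (flip k) g x) := by
    have hkx : Measurable fun y => k x y * g y := hk.of_uncurry_left.mul hg
    simp only [kernelOp, mul_assoc, add_mul]
    exact (lintegral_const_mul C (hkx.add (hk.of_uncurry_right.mul hg))).trans
      (congrArg (C * ·) (lintegral_add_left hkx _))
  calc ∫⁻ y, kernelOp ν (flip k) g y ^ 2 ∂ν
      = ∫⁻ x, g x * kernelOp ν k (kernelOp ν (flip k) g) x ∂ν := by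
        simp_rw [sq]
        exact (lintegral_mul_kernelOp hk hT' hg).symm
    _ ≤ ∫⁻ x, g x * (C * (kernelOp ν k g x + kernelOp ν (flip k) g x)) ∂ν := by
        refine lintegral_mono fun x => mul_le_mul_right ?_ _
        rw [kernelOp_kernelOp hk hk' hg, ← kernelOp_add]
        exact kernelOp_mono hC x
    _ = C * (∫⁻ x, g x * kernelOp ν k g x ∂ν + ∫⁻ x, g x * kernelOp ν (flip k) g x ∂ν) := by
        simp only [mul_left_comm _ C, mul_add (g _)]
        exact (lintegral_const_mul C ((hg.mul hT).add (hg.mul hT'))).trans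
          (congrArg (C * ·) (lintegral_add_left (hg.mul hT) _))
    _ = 2 * C * ∫⁻ x, g x * kernelOp ν k g x ∂ν := by
        rw [← lintegral_mul_kernelOp hk hg hg]
        ring

/-- `a` bounds the square of the norm of `kernelOp ν k` on `L²(ν)`. -/
def KernelOpSqBound (ν : Measure α) (k : α → α → ℝ≥0∞) (a : ℝ≥0∞) : Prop :=
  ∀ f : α → ℝ≥0∞, Measurable f → ∫⁻ x, f x ^ 2 ∂ν ≠ ∞ →
    ∫⁻ x, kernelOp ν k f x ^ 2 ∂ν ≤ a * ∫⁻ x, f x ^ 2 ∂ν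

lemma kernelOpSqBound_of_le {b : ℝ≥0∞} (hb : ∀ x y, k x y ≤ b) :
    KernelOpSqBound ν k ((b * ν univ) ^ 2) := by
  intro f hf _
  have hpt (x : α) : kernelOp ν k f x ^ 2 ≤ b ^ 2 * ν univ * ∫⁻ y, f y ^ 2 ∂ν := by
    calc kernelOp ν k f x ^ 2 ≤ (b * ∫⁻ y, 1 * f y ∂ν) ^ 2 := by
          rw [← lintegral_const_mul _ (by fun_prop)]
          gcongr
          exact (kernelOp_mono hb x).trans_eq (by simp [kernelOp])
      _ ≤ b ^ 2 * ((∫⁻ _, 1 ^ 2 ∂ν) * ∫⁻ y, f y ^ 2 ∂ν) := by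
          rw [mul_pow]
          gcongr
          exact sq_lintegral_mul_le measurable_const hf
      _ = b ^ 2 * ν univ * ∫⁻ y, f y ^ 2 ∂ν := by simp [mul_assoc]
  refine (lintegral_mono hpt).trans_eq ?_
  rw [lintegral_const]
  ring

lemma kernelOpSqBound_sInf {a : ℝ≥0∞} (ha : KernelOpSqBound ν k a) :
    KernelOpSqBound ν k (sInf {a | KernelOpSqBound ν k a}) := by
  intro f hf hF
  rcases eq_or_ne (∫⁻ x, f x ^ 2 ∂ν) 0 with h0 | h0
  · simpa [h0] using ha f hf hF
  rw [← ENNReal.div_le_iff h0 hF]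
  exact le_sInf fun b hb => (ENNReal.div_le_iff h0 hF).2 (hb f hf hF)

-- `‖Tf‖⁴ = ⟨f, T*Tf⟩² ≤ ‖f‖² ‖T*Tf‖² ≤ ‖f‖² · 2 C ⟨Tf, TTf⟩ ≤ ‖f‖² · 2 C √a ‖Tf‖²`.
lemma KernelOpSqBound.improve [SFinite ν] {a C : ℝ≥0∞} (ha : KernelOpSqBound ν k a)
    (ha_top : a ≠ ∞) (hk : Measurable (Function.uncurry k))
    (hC : ∀ x x', ∫⁻ y, k x y * k x' y ∂ν ≤ C * (k x x' + k x' x))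
    {b : ℝ≥0∞} (hb : b ^ 2 = 4 * C ^ 2 * a) : KernelOpSqBound ν k b := by
  intro f hf hF
  set F := ∫⁻ x, f x ^ 2 ∂ν
  set g := kernelOp ν k f
  set X := ∫⁻ x, g x ^ 2 ∂ν
  set Y := ∫⁻ x, g x * kernelOp ν k g x ∂ν
  have hg : Measurable g := measurable_kernelOp hk hf
  have hX : X ≠ ∞ := ne_top_of_le_ne_top (ENNReal.mul_ne_top ha_top hF) (ha f hf hF)
  rcases eq_or_ne X 0 with hX0 | hX0
  · exact hX0.trans_le zero_le
  have hXY : X ^ 2 ≤ F * (2 * C * Y) := by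
    calc X ^ 2 = (∫⁻ y, f y * kernelOp ν (flip k) g y ∂ν) ^ 2 := by
          rw [← lintegral_mul_kernelOp hk hf hg]
          simp only [X, g, sq]
      _ ≤ F * ∫⁻ y, kernelOp ν (flip k) g y ^ 2 ∂ν :=
          sq_lintegral_mul_le hf (measurable_kernelOp (hk.comp measurable_swap) hg)
      _ ≤ F * (2 * C * Y) := by
          gcongr
          exact lintegral_sq_kernelOp_flip_le hk hC hg
  have hYX : Y ^ 2 ≤ X * (a * X) :=
    (sq_lintegral_mul_le hg (measurable_kernelOp hk hg)).trans (by gcongr; exact ha g hg hX)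
  have hmain : X ^ 2 * X ^ 2 ≤ (b * F) ^ 2 * X ^ 2 := by
    calc X ^ 2 * X ^ 2 ≤ (F * (2 * C * Y)) * (F * (2 * C * Y)) := by gcongr
      _ = 4 * C ^ 2 * F ^ 2 * Y ^ 2 := by ring
      _ ≤ 4 * C ^ 2 * F ^ 2 * (X * (a * X)) := by gcongr
      _ = (b * F) ^ 2 * X ^ 2 := by rw [mul_pow, hb]; ring
  exact (ENNReal.pow_right_strictMono two_ne_zero).le_iff_le.1
    ((ENNReal.mul_le_mul_iff_left (by simp [hX0]) (by finiteness)).1 hmain)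

theorem kernelOpSqBound_of_comp_le [IsFiniteMeasure ν] {b C : ℝ≥0∞}
    (hk : Measurable (Function.uncurry k)) (hb : ∀ x y, k x y ≤ b) (hb_top : b ≠ ∞)
    (hC : ∀ x x', ∫⁻ y, k x y * k x' y ∂ν ≤ C * (k x x' + k x' x)) :
    KernelOpSqBound ν k (4 * C ^ 2) := by
  have hbound : KernelOpSqBound ν k ((b * ν univ) ^ 2) := kernelOpSqBound_of_le hb
  have hbound_top : (b * ν univ) ^ 2 ≠ ∞ := by finiteness
  set a := sInf {a | KernelOpSqBound ν k a}
  have ha : KernelOpSqBound ν k a := kernelOpSqBound_sInf hbound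
  have ha_top : a ≠ ∞ := ne_top_of_le_ne_top hbound_top (sInf_le hbound)
  have hsqrt : ((4 * C ^ 2 * a) ^ (1 / 2 : ℝ)) ^ 2 = 4 * C ^ 2 * a := by
    rw [← ENNReal.rpow_natCast, ← ENNReal.rpow_mul]
    norm_num
  have haa : a * a ≤ 4 * C ^ 2 * a := by
    have hle : a ≤ (4 * C ^ 2 * a) ^ (1 / 2 : ℝ) := sInf_le (ha.improve ha_top hk hC hsqrt)
    rw [← hsqrt, sq]
    gcongr
  have ha_le : a ≤ 4 * C ^ 2 := by
    rcases eq_or_ne a 0 with h0 | h0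
    · exact h0.trans_le zero_le
    · exact (ENNReal.mul_le_mul_iff_left h0 ha_top).1 haa
  exact fun f hf hF => (ha f hf hF).trans (by gcongr)

end KernelOperators

section MaximalOperator

variable {α : Type*} [MeasurableSpace α] {ν : Measure α} {κ : ℕ → α → α → ℝ≥0∞} {f : α → ℝ≥0∞}

/-- The maximal operator of the family of kernels `κ`. -/
def maximalOp (ν : Measure α) (κ : ℕ → α → α → ℝ≥0∞) (f : α → ℝ≥0∞) (x : α) : ℝ≥0∞ :=
  ⨆ k, kernelOp ν (κ k) f x

lemma maximalOp_le_mul {g : α → ℝ≥0∞} {C : ℝ≥0∞} (hC : C ≠ ∞) (h : ∀ y, f y ≤ C * g y) (x : α) :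
    maximalOp ν κ f x ≤ C * maximalOp ν κ g x := by
  refine iSup_le fun k => ?_
  calc kernelOp ν (κ k) f x ≤ ∫⁻ y, C * (κ k x y * g y) ∂ν := lintegral_mono fun y =>
        (mul_le_mul_right (h y) _).trans_eq (mul_left_comm _ _ _)
    _ = C * kernelOp ν (κ k) g x := lintegral_const_mul' _ _ hC
    _ ≤ C * maximalOp ν κ g x := by
        gcongr
        exact le_iSup (fun k => kernelOp ν (κ k) g x) k

lemma exists_measurable_index_eq_partialSups {u : ℕ → α → ℝ≥0∞} (hu : ∀ k, Measurable (u k))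
    (K : ℕ) : ∃ φ : α → ℕ, Measurable φ ∧ ∀ x, φ x ≤ K ∧ u (φ x) x = partialSups u K x := by
  induction K with
  | zero => exact ⟨fun _ => 0, measurable_const, fun x => by simp⟩
  | succ K ih =>
    obtain ⟨φ, hφ, hφu⟩ := ih
    have hsup : Measurable (partialSups u K) := by
      rw [partialSups_apply]
      exact Finset.measurable_sup' _ fun k _ => hu k
    classical
    refine ⟨fun x => if u (K + 1) x ≤ partialSups u K x then φ x else K + 1,
      Measurable.ite (measurableSet_le (hu _) hsup) hφ measurable_const, fun x => ?_⟩
    dsimp only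
    rw [partialSups_add_one, Pi.sup_apply]
    split_ifs with hle
    · exact ⟨(hφu x).1.trans K.le_succ, by rw [sup_eq_left.2 hle, (hφu x).2]⟩
    · exact ⟨le_rfl, (sup_eq_right.2 (not_le.1 hle).le).symm⟩

lemma kernelOpSqBound_comp_index [IsFiniteMeasure ν] {C : ℝ≥0∞}
    (hκ : ∀ k, Measurable (Function.uncurry (κ k)))
    (hbdd : ∀ k, ∃ b : ℝ≥0∞, b ≠ ∞ ∧ ∀ x y, κ k x y ≤ b)
    (hC : ∀ k l x x', ∫⁻ y, κ k x y * κ l x' y ∂ν ≤ C * (κ k x x' + κ l x' x))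
    {φ : α → ℕ} (hφ : Measurable φ) {K : ℕ} (hK : ∀ x, φ x ≤ K) :
    KernelOpSqBound ν (fun x => κ (φ x) x) (4 * C ^ 2) := by
  choose b hb_top hb using hbdd
  have hmeas : Measurable fun p : ℕ × α × α => κ p.1 p.2.1 p.2.2 :=
    measurable_from_prod_countable_right hκ
  refine kernelOpSqBound_of_comp_le (b := ∑ k ∈ Finset.range (K + 1), b k)
    (hmeas.comp ((hφ.comp measurable_fst).prodMk measurable_id)) (fun x y => ?_)
    (ENNReal.sum_ne_top.2 fun k _ => hb_top k) (fun x x' => hC _ _ x x')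
  exact (hb _ x y).trans
    (Finset.single_le_sum_of_canonicallyOrdered (Finset.mem_range_succ_iff.2 (hK x)))

theorem lintegral_sq_maximalOp_le [IsFiniteMeasure ν] {C : ℝ≥0∞} (hC0 : C ≠ 0)
    (hκ : ∀ k, Measurable (Function.uncurry (κ k)))
    (hbdd : ∀ k, ∃ b : ℝ≥0∞, b ≠ ∞ ∧ ∀ x y, κ k x y ≤ b)
    (hC : ∀ k l x x', ∫⁻ y, κ k x y * κ l x' y ∂ν ≤ C * (κ k x x' + κ l x' x))
    (hf : Measurable f) :
    ∫⁻ x, maximalOp ν κ f x ^ 2 ∂ν ≤ 4 * C ^ 2 * ∫⁻ x, f x ^ 2 ∂ν := by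
  rcases eq_or_ne (∫⁻ x, f x ^ 2 ∂ν) ∞ with hF | hF
  · rw [hF, ENNReal.mul_top (by simp [hC0])]
    exact le_top
  set u : ℕ → α → ℝ≥0∞ := fun k => kernelOp ν (κ k) f
  have hu (k : ℕ) : Measurable (u k) := measurable_kernelOp (hκ k) hf
  have hsup (x : α) : maximalOp ν κ f x ^ 2 = ⨆ K, partialSups u K x ^ 2 := by
    have hsq : Monotone fun a : ℝ≥0∞ => a ^ 2 := fun _ _ h => pow_le_pow_left₀ zero_le h 2
    rw [show maximalOp ν κ f x = ⨆ K, partialSups u K x by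
      simp only [Pi.partialSups_apply, iSup_partialSups_eq]; rfl]
    exact hsq.map_iSup_of_continuousAt (by fun_prop) (by simp)
  simp_rw [hsup]
  rw [lintegral_iSup]
  · refine iSup_le fun K => ?_
    obtain ⟨φ, hφ, hφu⟩ := exists_measurable_index_eq_partialSups hu K
    simp_rw [← (hφu _).2]
    exact kernelOpSqBound_comp_index hκ hbdd hC hφ (fun x => (hφu x).1) f hf hF
  · intro K
    rw [partialSups_apply]
    exact (Finset.measurable_sup' _ fun k _ => hu k).pow_const 2
  · exact fun K L hKL x => pow_le_pow_left₀ zero_le ((partialSups u).monotone hKL x) 2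

end MaximalOperator

section Circle

/-- Arc length on the unit circle, in the angular coordinate `θ ∈ (-π, π)`. -/
def angleMeasure : Measure ℝ := volume.restrict (Ioo (-Real.pi) Real.pi)

instance : IsFiniteMeasure angleMeasure := by
  unfold angleMeasure
  infer_instance

lemma circleAverage_eq_integral_angleMeasure {E : Type*} [NormedAddCommGroup E] [NormedSpace ℝ E]
    (g : ℂ → E) (c : ℂ) (s : ℝ) :
    Real.circleAverage g c s = (2 * Real.pi)⁻¹ • ∫ y, g (circleMap c s y) ∂angleMeasure := by
  rw [Real.circleAverage_eq_integral_add (-Real.pi),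
    intervalIntegral.integral_comp_add_right (fun θ => g (circleMap c s θ)), angleMeasure,
    ← integral_Ioc_eq_integral_Ioo, ← intervalIntegral.integral_of_le (by linarith [Real.pi_pos])]
  ring_nf

variable {s : ℝ} {w : ℂ}

lemma poissonKernel_circleMap_nonneg (hw : w ∈ ball (0 : ℂ) s) (y : ℝ) :
    0 ≤ poissonKernel 0 w (circleMap 0 s y) := by
  have hws : ‖w‖ < s := by simpa using hw
  rw [poissonKernel_def, sub_zero, sub_zero, norm_circleMap_zero, sq_abs]
  have : ‖w‖ ^ 2 ≤ s ^ 2 := by gcongr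
  exact div_nonneg (by linarith) (sq_nonneg _)

lemma continuous_poissonKernel_circleMap (hw : w ∈ ball (0 : ℂ) s) :
    Continuous fun y => poissonKernel 0 w (circleMap 0 s y) := by
  simp only [poissonKernel_def, sub_zero]
  refine Continuous.div (by fun_prop) (by fun_prop) fun y => ?_
  have := sub_ne_zero.2 (circleMap_ne_mem_ball hw y)
  positivity

lemma enorm_le_lintegral_poissonKernel {g : ℂ → ℂ} (hg : DiffContOnCl ℂ g (ball 0 s))
    (hw : w ∈ ball (0 : ℂ) s) :
    ‖g w‖ₑ ≤ ∫⁻ y, ENNReal.ofReal (poissonKernel 0 w (circleMap 0 s y)) *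
      ‖g (circleMap 0 s y)‖ₑ ∂angleMeasure := by
  have hpi : ‖(2 * Real.pi)⁻¹‖ₑ ≤ 1 := by
    rw [← ofReal_norm, ENNReal.ofReal_le_one, Real.norm_of_nonneg (by positivity)]
    exact inv_le_one_of_one_le₀ (by linarith [Real.pi_gt_three])
  rw [← hg.circleAverage_poissonKernel_smul hw, circleAverage_eq_integral_angleMeasure, enorm_smul]
  refine (mul_le_of_le_one_left' hpi).trans ((enorm_integral_le_lintegral_enorm _).trans_eq ?_)
  refine lintegral_congr fun y => ?_
  rw [Pi.smul_apply', enorm_smul, Real.enorm_of_nonneg (poissonKernel_circleMap_nonneg hw y)]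

lemma lintegral_poissonKernel (hw : w ∈ ball (0 : ℂ) s) :
    ∫⁻ y, ENNReal.ofReal (poissonKernel 0 w (circleMap 0 s y)) ∂angleMeasure =
      ENNReal.ofReal (2 * Real.pi) := by
  have hint : Integrable (fun y => poissonKernel 0 w (circleMap 0 s y)) angleMeasure :=
    (continuous_poissonKernel_circleMap hw).continuousOn.integrableOn_Icc.mono_set
      Ioo_subset_Icc_self
  have havg := (diffContOnCl_const (c := (1 : ℂ))).circleAverage_poissonKernel_smul hw
  rw [circleAverage_eq_integral_angleMeasure] at havg
  have hone : (2 * Real.pi)⁻¹ * ∫ y, poissonKernel 0 w (circleMap 0 s y) ∂angleMeasure = 1 := by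
    rw [← Complex.ofReal_inj]
    simpa [integral_complex_ofReal] using havg
  rw [← ofReal_integral_eq_lintegral_ofReal hint
    (Filter.Eventually.of_forall (poissonKernel_circleMap_nonneg hw))]
  congr 1
  field_simp at hone
  exact hone

end Circle

section CircleKernel

/-- The profile of the Poisson kernel at distance `d` from its peak, for a point at depth `h`. -/
def poissonBump (h d : ℝ) : ℝ := h / (h + d) ^ 2

lemma poissonBump_nonneg {h d : ℝ} (hh : 0 ≤ h) : 0 ≤ poissonBump h d := by
  unfold poissonBump
  positivity

lemma poissonBump_le_mul {h h' d d' A B : ℝ} (hh : 0 < h) (hd : 0 ≤ d) (hh' : 0 < h')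
    (hd' : 0 ≤ d') (hA : h' ≤ A * h) (hB : h + d ≤ B * (h' + d')) :
    poissonBump h' d' ≤ A * B ^ 2 * poissonBump h d := by
  unfold poissonBump
  rw [mul_div_assoc', div_le_div_iff₀ (by positivity) (by positivity)]
  calc h' * (h + d) ^ 2 ≤ (A * h) * (B * (h' + d')) ^ 2 := by
        gcongr
        exact hh'.le.trans hA
    _ = A * B ^ 2 * h * (h' + d') ^ 2 := by ring

lemma poissonBump_mul_le {h h' a b d : ℝ} (hh' : 0 < h') (hle : h' ≤ h) (ha : 0 ≤ a) (hb : 0 ≤ b)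
    (hd : 0 ≤ d) (hdab : d ≤ a + b) :
    poissonBump h a * poissonBump h' b ≤
      16 * poissonBump h d * (poissonBump h a + poissonBump h' b) := by
  have hh : 0 < h := hh'.trans_le hle
  have ha0 : 0 ≤ poissonBump h a := poissonBump_nonneg hh.le
  have hb0 : 0 ≤ poissonBump h' b := poissonBump_nonneg hh'.le
  have hd0 : 0 ≤ poissonBump h d := poissonBump_nonneg hh.le
  have hor : poissonBump h a ≤ 16 * poissonBump h d ∨ poissonBump h' b ≤ 16 * poissonBump h d := by
    rcases le_or_gt (h + d) (4 * (h + a)) with hfar | hnear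
    · left
      linarith [poissonBump_le_mul (A := 1) hh hd hh ha (by linarith) hfar]
    · right
      linarith [poissonBump_le_mul (A := 1) (B := 4) hh hd hh' hb (by linarith) (by linarith)]
  rcases hor with hle | hle <;> nlinarith [mul_nonneg hd0 ha0, mul_nonneg hd0 hb0]

/-- The Poisson-type kernel of the circle at scale `2⁻ᵏ`, in angular coordinates. -/
def circleKernel (k : ℕ) (x y : ℝ) : ℝ≥0∞ :=
  ENNReal.ofReal (poissonBump ((1 / 2) ^ k) ‖circleMap 0 1 x - circleMap 0 1 y‖)

lemma measurable_circleKernel (k : ℕ) : Measurable (Function.uncurry (circleKernel k)) := by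
  unfold circleKernel Function.uncurry poissonBump
  fun_prop

lemma exists_circleKernel_le (k : ℕ) : ∃ b : ℝ≥0∞, b ≠ ∞ ∧ ∀ x y, circleKernel k x y ≤ b := by
  refine ⟨ENNReal.ofReal (poissonBump ((1 / 2) ^ k) 0), by finiteness, fun x y => ?_⟩
  unfold circleKernel poissonBump
  gcongr
  exact norm_nonneg _

lemma norm_circleMap_sub_circleMap_le (r r' x y : ℝ) :
    ‖circleMap 0 r x - circleMap 0 r' y‖ ≤
      |r - r'| + |r'| * ‖circleMap 0 1 x - circleMap 0 1 y‖ := by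
  have hsplit : circleMap 0 r x - circleMap 0 r' y =
      circleMap 0 (r - r') x + (r' : ℂ) * (circleMap 0 1 x - circleMap 0 1 y) := by
    simp only [circleMap_zero, Complex.ofReal_sub, Complex.ofReal_one]
    ring
  rw [hsplit]
  refine (norm_add_le _ _).trans_eq ?_
  rw [norm_circleMap_zero, norm_mul, Complex.norm_real, Real.norm_eq_abs]

lemma circleKernel_le_poissonKernel (k : ℕ) (x y : ℝ) :
    circleKernel k x y ≤ ENNReal.ofReal
      (2 * poissonKernel 0 (circleMap 0 (1 - (1 / 2) ^ k / 2) x) (circleMap 0 1 y)) := by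
  refine ENNReal.ofReal_le_ofReal ?_
  set h : ℝ := (1 / 2) ^ k
  have h0 : 0 < h := by positivity
  have h1 : h ≤ 1 := pow_le_one₀ (by norm_num) (by norm_num)
  set w := circleMap 0 (1 - h / 2) x
  have hw : ‖w‖ = 1 - h / 2 := by rw [norm_circleMap_zero, abs_of_pos (by linarith)]
  have hw1 : w ∈ ball (0 : ℂ) 1 := by
    rw [mem_ball_zero_iff]
    linarith
  have hpos : 0 < ‖circleMap 0 1 y - w‖ := norm_sub_pos_iff.2 (circleMap_ne_mem_ball hw1 y)
  have hle : ‖circleMap 0 1 y - w‖ ≤ h + ‖circleMap 0 1 x - circleMap 0 1 y‖ := by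
    rw [norm_sub_rev]
    refine (norm_circleMap_sub_circleMap_le _ _ x y).trans ?_
    rw [sub_sub_cancel_left, abs_neg, abs_one, one_mul, abs_of_pos (by positivity)]
    linarith
  unfold poissonBump
  rw [poissonKernel_def, sub_zero, sub_zero, norm_circleMap_zero, abs_one, hw, mul_div_assoc']
  exact div_le_div₀ (by nlinarith) (by nlinarith) (by positivity) (by gcongr)

lemma lintegral_circleKernel_le (k : ℕ) (x : ℝ) :
    ∫⁻ y, circleKernel k x y ∂angleMeasure ≤ 16 := by
  set w := circleMap 0 (1 - (1 / 2) ^ k / 2) x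
  have hw : w ∈ ball (0 : ℂ) 1 := by
    have h0 : (0 : ℝ) < (1 / 2) ^ k := by positivity
    have h1 : (1 / 2 : ℝ) ^ k ≤ 1 := pow_le_one₀ (by norm_num) (by norm_num)
    rw [mem_ball_zero_iff, norm_circleMap_zero, abs_of_pos (by linarith)]
    linarith
  calc ∫⁻ y, circleKernel k x y ∂angleMeasure
      ≤ ∫⁻ y, 2 * ENNReal.ofReal (poissonKernel 0 w (circleMap 0 1 y)) ∂angleMeasure := by
        refine lintegral_mono fun y => (circleKernel_le_poissonKernel k x y).trans_eq ?_
        rw [ENNReal.ofReal_mul zero_le_two, ENNReal.ofReal_ofNat]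
    _ = 2 * ENNReal.ofReal (2 * Real.pi) := by
        rw [lintegral_const_mul _
          (continuous_poissonKernel_circleMap hw).measurable.ennreal_ofReal,
          lintegral_poissonKernel hw]
    _ ≤ 2 * ENNReal.ofReal 8 := by
        gcongr
        linarith [Real.pi_le_four]
    _ = 16 := by
        rw [ENNReal.ofReal_ofNat]
        norm_num

lemma circleKernel_mul_le {k l : ℕ} (hkl : k ≤ l) (x x' y : ℝ) :
    circleKernel k x y * circleKernel l x' y ≤
      16 * circleKernel k x x' * (circleKernel k x y + circleKernel l x' y) := by
  have hk : (0 : ℝ) < (1 / 2) ^ k := by positivity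
  have hl : (0 : ℝ) < (1 / 2) ^ l := by positivity
  have hbump := ENNReal.ofReal_le_ofReal <| poissonBump_mul_le hl
    (pow_le_pow_of_le_one (by norm_num) (by norm_num) hkl)
    (norm_nonneg (circleMap 0 1 x - circleMap 0 1 y))
    (norm_nonneg (circleMap 0 1 x' - circleMap 0 1 y))
    (norm_nonneg (circleMap 0 1 x - circleMap 0 1 x'))
    ((norm_sub_le_norm_sub_add_norm_sub _ (circleMap 0 1 y) _).trans_eq
      (by rw [norm_sub_rev (circleMap 0 1 y)]))
  rwa [ENNReal.ofReal_mul (poissonBump_nonneg hk.le),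
    ENNReal.ofReal_mul (mul_nonneg (by norm_num) (poissonBump_nonneg hk.le)),
    ENNReal.ofReal_mul (by norm_num), ENNReal.ofReal_add (poissonBump_nonneg hk.le)
    (poissonBump_nonneg hl.le), ENNReal.ofReal_ofNat] at hbump

lemma lintegral_circleKernel_mul_le_of_le {k l : ℕ} (hkl : k ≤ l) (x x' : ℝ) :
    ∫⁻ y, circleKernel k x y * circleKernel l x' y ∂angleMeasure ≤ 512 * circleKernel k x x' := by
  have hmeas (k : ℕ) (x : ℝ) : Measurable (circleKernel k x) :=
    (measurable_circleKernel k).of_uncurry_left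
  calc ∫⁻ y, circleKernel k x y * circleKernel l x' y ∂angleMeasure
      ≤ ∫⁻ y, 16 * circleKernel k x x' * (circleKernel k x y + circleKernel l x' y) ∂angleMeasure :=
        lintegral_mono (circleKernel_mul_le hkl x x')
    _ = 16 * circleKernel k x x' * (∫⁻ y, circleKernel k x y ∂angleMeasure +
          ∫⁻ y, circleKernel l x' y ∂angleMeasure) := by
        rw [← lintegral_add_left (hmeas k x)]
        exact lintegral_const_mul _ ((hmeas k x).add (hmeas l x'))
    _ ≤ 16 * circleKernel k x x' * (16 + 16) := by
        gcongr <;> exact lintegral_circleKernel_le _ _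
    _ = 512 * circleKernel k x x' := by
        rw [mul_right_comm]
        norm_num

theorem lintegral_sq_circleMaximal_le {f : ℝ → ℝ≥0∞} (hf : Measurable f) :
    ∫⁻ x, maximalOp angleMeasure circleKernel f x ^ 2 ∂angleMeasure ≤
      4 * 512 ^ 2 * ∫⁻ x, f x ^ 2 ∂angleMeasure := by
  refine lintegral_sq_maximalOp_le (by norm_num) measurable_circleKernel exists_circleKernel_le
    (fun k l x x' => ?_) hf
  rw [mul_add]
  rcases le_total k l with hkl | hlk
  · exact (lintegral_circleKernel_mul_le_of_le hkl x x').trans le_self_add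
  · simp_rw [mul_comm (circleKernel k x _)]
    exact (lintegral_circleKernel_mul_le_of_le hlk x' x).trans le_add_self

end CircleKernel

section IteratedMaximal

variable {ι : Type*} [DecidableEq ι] {g : (ι → ℝ) → ℝ≥0∞}

/-- The maximal operator of the circle acting in the `i`-th angular coordinate. -/
def coordMaximalOp (i : ι) (g : (ι → ℝ) → ℝ≥0∞) (x : ι → ℝ) : ℝ≥0∞ :=
  maximalOp angleMeasure circleKernel (fun y => g (Function.update x i y)) (x i)

/-- The iterated maximal operator of the torus along a list of coordinates. -/
def iteratedMaximalOp (l : List ι) (g : (ι → ℝ) → ℝ≥0∞) : (ι → ℝ) → ℝ≥0∞ :=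
  l.foldr coordMaximalOp g

lemma measurable_coordMaximalOp (i : ι) (hg : Measurable g) : Measurable (coordMaximalOp i g) := by
  refine Measurable.iSup fun k => Measurable.lintegral_prod_right'
    (f := fun p : (ι → ℝ) × ℝ => circleKernel k (p.1 i) p.2 * g (Function.update p.1 i p.2)) ?_
  have hcoord : Measurable fun p : (ι → ℝ) × ℝ => (p.1 i, p.2) := by fun_prop
  exact ((measurable_circleKernel k).comp hcoord).mul (hg.comp measurable_update')

lemma measurable_iteratedMaximalOp (l : List ι) (hg : Measurable g) :
    Measurable (iteratedMaximalOp l g) := by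
  induction l with
  | nil => exact hg
  | cons i l ih => exact measurable_coordMaximalOp i ih

variable [Fintype ι]

lemma lintegral_sq_coordMaximalOp_le (i : ι) (hg : Measurable g) :
    ∫⁻ x, coordMaximalOp i g x ^ 2 ∂(Measure.pi fun _ => angleMeasure) ≤
      4 * 512 ^ 2 * ∫⁻ x, g x ^ 2 ∂(Measure.pi fun _ => angleMeasure) := by
  have hgsq : Measurable fun x => g x ^ 2 := hg.pow_const 2
  rw [← lintegral_const_mul _ hgsq]
  apply lintegral_le_of_lmarginal_le {i} ((measurable_coordMaximalOp i hg).pow_const 2)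
    (hgsq.const_mul _)
  rw [lmarginal_singleton, lmarginal_singleton]
  intro x
  have hslice : Measurable fun y => g (Function.update x i y) := hg.comp (measurable_update x)
  have hslicesq : Measurable fun y => g (Function.update x i y) ^ 2 := hslice.pow_const 2
  dsimp only
  rw [lintegral_const_mul _ hslicesq]
  simpa only [coordMaximalOp, Function.update_self, Function.update_idem] using
    lintegral_sq_circleMaximal_le hslice

lemma lintegral_sq_iteratedMaximalOp_le (l : List ι) (hg : Measurable g) :
    ∫⁻ x, iteratedMaximalOp l g x ^ 2 ∂(Measure.pi fun _ => angleMeasure) ≤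
      (4 * 512 ^ 2) ^ l.length * ∫⁻ x, g x ^ 2 ∂(Measure.pi fun _ => angleMeasure) := by
  induction l with
  | nil => simp [iteratedMaximalOp]
  | cons i l ih =>
    rw [List.length_cons, pow_succ', mul_assoc]
    exact (lintegral_sq_coordMaximalOp_le i (measurable_iteratedMaximalOp l hg)).trans
      (mul_le_mul_right ih _)

end IteratedMaximal

section PatchEstimate

/-- The nontangential approach region of aperture `c` with vertex `circleMap 0 s x` in the disc of
radius `s`. Measuring distances to the whole circle rather than to the vertex alone is what the
Poisson kernel needs. -/
def stolzRegion (c s x : ℝ) : Set ℂ :=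
  {w | ‖w‖ < s ∧ ∀ y, c * ‖circleMap 0 1 x - circleMap 0 1 y‖ ≤ ‖w - circleMap 0 s y‖}

lemma poissonKernel_le_poissonBump {c s x : ℝ} (hc0 : 0 < c) (hc1 : c ≤ 1) {w : ℂ}
    (hw : w ∈ stolzRegion c s x) (y : ℝ) :
    poissonKernel 0 w (circleMap 0 s y) ≤
      8 * s / c ^ 2 * poissonBump (s - ‖w‖) ‖circleMap 0 1 x - circleMap 0 1 y‖ := by
  obtain ⟨hws, hdist⟩ := hw
  have hw0 := norm_nonneg w
  have hh : 0 < s - ‖w‖ := sub_pos.2 hws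
  have hs : 0 < s := hw0.trans_lt hws
  have hrad : s - ‖w‖ ≤ ‖circleMap 0 s y - w‖ := by
    refine le_trans (le_of_eq ?_) (norm_sub_norm_le _ _)
    rw [norm_circleMap_zero, abs_of_pos hs]
  have hang := hdist y
  rw [norm_sub_rev w] at hang
  set d := ‖circleMap 0 1 x - circleMap 0 1 y‖
  have hd : 0 ≤ d := norm_nonneg _
  have hboth : c / 2 * (s - ‖w‖ + d) ≤ ‖circleMap 0 s y - w‖ := by nlinarith
  rw [poissonKernel_def, sub_zero, sub_zero, norm_circleMap_zero, abs_of_pos hs]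
  calc (s ^ 2 - ‖w‖ ^ 2) / ‖circleMap 0 s y - w‖ ^ 2
      ≤ 2 * s * (s - ‖w‖) / (c / 2 * (s - ‖w‖ + d)) ^ 2 :=
        div_le_div₀ (by positivity) (by nlinarith) (by positivity) (by gcongr)
    _ = 8 * s / c ^ 2 * poissonBump (s - ‖w‖) d := by
        unfold poissonBump
        field_simp
        norm_num

lemma exists_poissonKernel_le_circleKernel {c s x : ℝ} (hs : s ≤ 1) (hc0 : 0 < c) (hc1 : c ≤ 1)
    {w : ℂ} (hw : w ∈ stolzRegion c s x) :
    ∃ k, ∀ y, ENNReal.ofReal (poissonKernel 0 w (circleMap 0 s y)) ≤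
      ENNReal.ofReal (16 / c ^ 2) * circleKernel k x y := by
  have hw0 := norm_nonneg w
  have hh : 0 < s - ‖w‖ := sub_pos.2 hw.1
  obtain ⟨k, hk, hk'⟩ := exists_nat_pow_near_of_lt_one hh (by linarith) (y := (1 / 2 : ℝ))
    (by norm_num) (by norm_num)
  refine ⟨k + 1, fun y => ?_⟩
  unfold circleKernel
  rw [← ENNReal.ofReal_mul (by positivity)]
  refine ENNReal.ofReal_le_ofReal ((poissonKernel_le_poissonBump hc0 hc1 hw y).trans ?_)
  set d := ‖circleMap 0 1 x - circleMap 0 1 y‖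
  have hd : 0 ≤ d := norm_nonneg _
  have hdouble : poissonBump (s - ‖w‖) d ≤ 2 * 1 ^ 2 * poissonBump ((1 / 2) ^ (k + 1)) d :=
    poissonBump_le_mul (by positivity) hd hh hd (by rw [pow_succ]; linarith) (by linarith)
  calc 8 * s / c ^ 2 * poissonBump (s - ‖w‖) d
      ≤ 8 * 1 / c ^ 2 * (2 * 1 ^ 2 * poissonBump ((1 / 2) ^ (k + 1)) d) := by
        gcongr
        exact poissonBump_nonneg hh.le
    _ = 16 / c ^ 2 * poissonBump ((1 / 2) ^ (k + 1)) d := by ring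

lemma enorm_le_maximalOp_of_mem_stolzRegion {g : ℂ → ℂ} {c s x : ℝ} {w : ℂ}
    (hg : DiffContOnCl ℂ g (ball 0 s)) (hs : s ≤ 1) (hc0 : 0 < c) (hc1 : c ≤ 1)
    (hw : w ∈ stolzRegion c s x) :
    ‖g w‖ₑ ≤ ENNReal.ofReal (16 / c ^ 2) *
      maximalOp angleMeasure circleKernel (fun y => ‖g (circleMap 0 s y)‖ₑ) x := by
  obtain ⟨k, hk⟩ := exists_poissonKernel_le_circleKernel hs hc0 hc1 hw
  calc ‖g w‖ₑ ≤ _ := enorm_le_lintegral_poissonKernel hg (mem_ball_zero_iff.2 hw.1)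
    _ ≤ ∫⁻ y, ENNReal.ofReal (16 / c ^ 2) *
          (circleKernel k x y * ‖g (circleMap 0 s y)‖ₑ) ∂angleMeasure :=
        lintegral_mono fun y => (mul_le_mul_left (hk y) _).trans_eq (mul_assoc _ _ _)
    _ = ENNReal.ofReal (16 / c ^ 2) *
          kernelOp angleMeasure (circleKernel k) (fun y => ‖g (circleMap 0 s y)‖ₑ) x :=
        lintegral_const_mul' _ _ ENNReal.ofReal_ne_top
    _ ≤ _ := by
        gcongr
        exact le_iSup (fun k => kernelOp angleMeasure (circleKernel k) _ x) k

lemma diffContOnCl_slice {n : ℕ} {f : (Fin n → ℂ) → ℂ} (hf : DifferentiableOn ℂ f (polydisc n))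
    {z : Fin n → ℂ} (hz : z ∈ polydisc n) (i : Fin n) {s : ℝ} (hs0 : 0 < s) (hs1 : s < 1) :
    DiffContOnCl ℂ (fun ξ => f (Function.update z i ξ)) (ball 0 s) := by
  apply DifferentiableOn.diffContOnCl
  rw [closure_ball _ hs0.ne']
  refine hf.comp (fun ξ _ => (hasFDerivAt_update z ξ).differentiableAt.differentiableWithinAt)
    fun ξ hξ j => ?_
  rcases eq_or_ne j i with rfl | hj
  · rw [Function.update_self]
    exact (mem_closedBall_zero_iff.1 hξ).trans_lt hs1
  · rw [Function.update_of_ne hj]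
    exact hz j

lemma norm_torusMap {n : ℕ} {s θ : Fin n → ℝ} (hs : ∀ i, 0 ≤ s i) (i : Fin n) :
    ‖torusMap 0 s θ i‖ = s i := by
  simp [torusMap, Complex.norm_exp_ofReal_mul_I, abs_of_nonneg (hs i)]

lemma torusMap_mem_polydisc_iff {n : ℕ} {s θ : Fin n → ℝ} (hs : ∀ i, 0 ≤ s i) :
    torusMap 0 s θ ∈ polydisc n ↔ ∀ i, s i < 1 := by
  simp only [polydisc, mem_ofPred_eq, norm_torusMap hs]

lemma continuous_torusMap {n : ℕ} :
    Continuous fun q : (Fin n → ℝ) × (Fin n → ℝ) => torusMap 0 q.1 q.2 := by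
  unfold torusMap
  fun_prop

theorem enorm_le_iteratedMaximalOp {n : ℕ} {f : (Fin n → ℂ) → ℂ}
    (hf : DifferentiableOn ℂ f (polydisc n)) {s : Fin n → ℝ} (hs0 : ∀ i, 0 < s i)
    (hs1 : ∀ i, s i < 1) {c : ℝ} (hc0 : 0 < c) (hc1 : c ≤ 1) {l : List (Fin n)} (hl : l.Nodup)
    {x : Fin n → ℝ} {z : Fin n → ℂ} (hvertex : ∀ i ∉ l, z i = circleMap 0 (s i) (x i))
    (hstolz : ∀ i ∈ l, z i ∈ stolzRegion c (s i) (x i)) :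
    ‖f z‖ₑ ≤ ENNReal.ofReal (16 / c ^ 2) ^ l.length *
      iteratedMaximalOp l (fun y => ‖f (torusMap 0 s y)‖ₑ) x := by
  induction l generalizing x z with
  | nil =>
    have hz : z = torusMap 0 s x := funext fun i => hvertex i (by simp)
    simp [iteratedMaximalOp, hz]
  | cons i l ih =>
    obtain ⟨hil, hl⟩ := List.nodup_cons.1 hl
    have hzi := hstolz i List.mem_cons_self
    have hz : z ∈ polydisc n := fun j => by
      by_cases hj : j ∈ i :: l
      · exact (hstolz j hj).1.trans (hs1 j)
      · rw [hvertex j hj, norm_circleMap_zero, abs_of_pos (hs0 j)]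
        exact hs1 j
    have hslice := enorm_le_maximalOp_of_mem_stolzRegion
      (diffContOnCl_slice hf hz i (hs0 i) (hs1 i)) (hs1 i).le hc0 hc1 hzi
    rw [Function.update_eq_self] at hslice
    set C := ENNReal.ofReal (16 / c ^ 2)
    set G := iteratedMaximalOp l fun y => ‖f (torusMap 0 s y)‖ₑ
    have hrest (y : ℝ) : ‖f (Function.update z i (circleMap 0 (s i) y))‖ₑ ≤
        C ^ l.length * G (Function.update x i y) := by
      refine ih hl (fun j hj => ?_) fun j hj => ?_
      · rcases eq_or_ne j i with rfl | hji
        · simp only [Function.update_self]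
        · simpa only [Function.update_of_ne hji] using hvertex j (by simp [hji, hj])
      · have hji : j ≠ i := ne_of_mem_of_not_mem hj hil
        simpa only [Function.update_of_ne hji] using hstolz j (List.mem_cons_of_mem i hj)
    calc ‖f z‖ₑ ≤ _ := hslice
      _ ≤ C * (C ^ l.length * coordMaximalOp i G x) := by
          gcongr
          exact maximalOp_le_mul (by finiteness) hrest (x i)
      _ = C ^ (l.length + 1) * coordMaximalOp i G x := by ring

lemma map_restrict_le_of_antilipschitz {ι : Type*} [Fintype ι] {U V : Set (ι → ℝ)}
    (hU : MeasurableSet U) {Ψ : (ι → ℝ) → ι → ℝ} (hΨ : ContinuousOn Ψ U) {K : NNReal}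
    (hK : AntilipschitzWith K (U.domRestrict Ψ)) (hUV : MapsTo Ψ U V) :
    (volume.restrict U).map Ψ ≤ ((K : ℝ≥0∞) ^ Fintype.card ι) • volume.restrict V := by
  refine Measure.le_iff.2 fun E hE => ?_
  rw [Measure.map_apply_of_aemeasurable (hΨ.aemeasurable hU) hE, Measure.smul_apply,
    Measure.restrict_apply hE, Measure.restrict_apply' hU, smul_eq_mul]
  have hpre := hK.hausdorffMeasure_preimage_le (d := Fintype.card ι) (by positivity) (E ∩ V)
  rw [← isometry_subtype_coe.hausdorffMeasure_image (Or.inl (by positivity)),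
    hausdorffMeasure_pi_real, ENNReal.rpow_natCast] at hpre
  refine le_trans (measure_mono ?_) hpre
  rintro θ ⟨hθE, hθU⟩
  exact ⟨⟨θ, hθU⟩, ⟨hθE, hUV hθU⟩, rfl⟩

/-- The cube of angular coordinates of the torus. -/
def angleBox (n : ℕ) : Set (Fin n → ℝ) := univ.pi fun _ => Ioo (-Real.pi) Real.pi

/-- The unnormalized squared Hardy mean of `f` over the torus of polyradius `s`. -/
def hardyMean {n : ℕ} (f : (Fin n → ℂ) → ℂ) (s : Fin n → ℝ) : ℝ≥0∞ :=
  ∫⁻ θ in angleBox n, ‖f (torusMap 0 s θ)‖ₑ ^ 2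

lemma restrict_angleBox (n : ℕ) :
    volume.restrict (angleBox n) = Measure.pi fun _ : Fin n => angleMeasure :=
  Measure.restrict_pi_pi _ _

/-- The constant per variable in the nontangential estimate `lintegral_sq_le_hardyMean`: `c` is the
aperture of the Stolz regions and `K` the antilipschitz constant of the map to the torus. -/
def stolzConst (c : ℝ) (K : NNReal) : ℝ≥0∞ := ENNReal.ofReal (16 / c ^ 2) ^ 2 * K * (4 * 512 ^ 2)

lemma stolzConst_ne_top (c : ℝ) (K : NNReal) : stolzConst c K ≠ ∞ := by
  unfold stolzConst
  finiteness

theorem lintegral_sq_le_hardyMean {n : ℕ} {f : (Fin n → ℂ) → ℂ}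
    (hf : DifferentiableOn ℂ f (polydisc n)) {s : Fin n → ℝ} (hs0 : ∀ i, 0 < s i)
    (hs1 : ∀ i, s i < 1) {c : ℝ} (hc0 : 0 < c) (hc1 : c ≤ 1) {U : Set (Fin n → ℝ)}
    (hU : MeasurableSet U) {Ψ : (Fin n → ℝ) → Fin n → ℝ} (hΨ : ContinuousOn Ψ U) {K : NNReal}
    (hK : AntilipschitzWith K (U.domRestrict Ψ)) (hbox : MapsTo Ψ U (angleBox n))
    {W : (Fin n → ℝ) → Fin n → ℂ} (hW : ∀ θ ∈ U, ∀ i, W θ i ∈ stolzRegion c (s i) (Ψ θ i)) :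
    ∫⁻ θ in U, ‖f (W θ)‖ₑ ^ 2 ≤
      stolzConst c K ^ n * hardyMean f s := by
  set C := ENNReal.ofReal (16 / c ^ 2)
  set g : (Fin n → ℝ) → ℝ≥0∞ := fun y => ‖f (torusMap 0 s y)‖ₑ
  have hg : Measurable g := by
    exact (hf.continuousOn.comp_continuous (continuous_torusMap.comp (.prodMk_right s)) fun _ =>
      (torusMap_mem_polydisc_iff fun i => (hs0 i).le).2 hs1).enorm.measurable
  set G := iteratedMaximalOp (List.finRange n) g
  have hG : Measurable G := measurable_iteratedMaximalOp _ hg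
  have hpoint : ∀ θ ∈ U, ‖f (W θ)‖ₑ ≤ C ^ n * G (Ψ θ) := fun θ hθ => by
    simpa only [List.length_finRange] using enorm_le_iteratedMaximalOp hf hs0 hs1 hc0 hc1
      (List.nodup_finRange n) (fun i hi => absurd (List.mem_finRange i) hi) fun i _ => hW θ hθ i
  have hpush := map_restrict_le_of_antilipschitz hU hΨ hK hbox
  rw [Fintype.card_fin] at hpush
  have hmax := lintegral_sq_iteratedMaximalOp_le (List.finRange n) hg
  rw [List.length_finRange, ← restrict_angleBox] at hmax
  calc ∫⁻ θ in U, ‖f (W θ)‖ₑ ^ 2 ≤ ∫⁻ θ in U, (C ^ n) ^ 2 * G (Ψ θ) ^ 2 := by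
        refine setLIntegral_mono' hU fun θ hθ => ?_
        rw [← mul_pow]
        gcongr
        exact hpoint θ hθ
    _ = (C ^ n) ^ 2 * ∫⁻ y, G y ^ 2 ∂((volume.restrict U).map Ψ) := by
        rw [lintegral_const_mul' _ _ (by finiteness),
          lintegral_map' (hG.pow_const 2).aemeasurable (hΨ.aemeasurable hU)]
    _ ≤ (C ^ n) ^ 2 * (K ^ n * ∫⁻ y in angleBox n, G y ^ 2) := by
        rw [← smul_eq_mul (K ^ n : ℝ≥0∞), ← lintegral_smul_measure]
        gcongr
    _ ≤ (C ^ n) ^ 2 * (K ^ n * ((4 * 512 ^ 2) ^ n * hardyMean f s)) := by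
        gcongr
        exact hmax
    _ = stolzConst c K ^ n * hardyMean f s := by rw [stolzConst]; ring

end PatchEstimate

section Polydisc

variable {n : ℕ} {Φ : (Fin n → ℂ) → Fin n → ℂ}

lemma polydisc_eq_ball (n : ℕ) : polydisc n = ball 0 1 := by
  ext z; simp [polydisc, pi_norm_lt_iff]

lemma closedPolydisc_eq_closedBall (n : ℕ) : closedPolydisc n = closedBall 0 1 := by
  ext z; simp [closedPolydisc, pi_norm_le_iff_of_nonneg]

lemma isOpen_polydisc (n : ℕ) : IsOpen (polydisc n) :=
  polydisc_eq_ball n ▸ isOpen_ball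

lemma polydisc_subset_closedPolydisc (n : ℕ) : polydisc n ⊆ closedPolydisc n :=
  fun _ hz j => (hz j).le

lemma closure_polydisc (n : ℕ) : closure (polydisc n) = closedPolydisc n := by
  rw [polydisc_eq_ball, closedPolydisc_eq_closedBall, closure_ball _ one_ne_zero]

lemma convex_closedPolydisc (n : ℕ) : Convex ℝ (closedPolydisc n) :=
  closedPolydisc_eq_closedBall n ▸ convex_closedBall 0 1

lemma uniqueDiffOn_closedPolydisc (n : ℕ) : UniqueDiffOn ℝ (closedPolydisc n) := by
  refine uniqueDiffOn_convex (convex_closedPolydisc n) ⟨0, ?_⟩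
  rw [closedPolydisc_eq_closedBall]
  exact ball_subset_interior_closedBall (mem_ball_self one_pos)

lemma mapsTo_closedPolydisc (hcont : ContinuousOn Φ (closedPolydisc n))
    (hmap : MapsTo Φ (polydisc n) (polydisc n)) :
    MapsTo Φ (closedPolydisc n) (closedPolydisc n) := by
  rw [← closure_polydisc] at hcont ⊢
  exact hmap.closure_of_continuousOn hcont

lemma mul_mem_polydisc_iff {ω z : Fin n → ℂ} (hω : ∀ i, ‖ω i‖ = 1) :
    ω * z ∈ polydisc n ↔ z ∈ polydisc n := by
  simp [polydisc, hω]

lemma differentiableOn_comp_mul {ω : Fin n → ℂ} (hω : ∀ i, ‖ω i‖ = 1) {f : (Fin n → ℂ) → ℂ}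
    (hf : DifferentiableOn ℂ f (polydisc n)) :
    DifferentiableOn ℂ (fun z => f (ω * z)) (polydisc n) :=
  hf.comp (by fun_prop) fun _ hz => (mul_mem_polydisc_iff hω).2 hz

lemma fderivWithin_closedPolydisc_smul (hhol : DifferentiableOn ℂ Φ (polydisc n))
    (hsm : ContDiffOn ℝ 1 Φ (closedPolydisc n)) {ζ : Fin n → ℂ} (hζ : ζ ∈ closedPolydisc n)
    (a : ℂ) (v : Fin n → ℂ) :
    fderivWithin ℝ Φ (closedPolydisc n) ζ (a • v) =
      a • fderivWithin ℝ Φ (closedPolydisc n) ζ v := by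
  have hcont := hsm.continuousOn_fderivWithin (uniqueDiffOn_closedPolydisc n) le_rfl
  have hinterior : EqOn (fun z => fderivWithin ℝ Φ (closedPolydisc n) z (a • v))
      (fun z => a • fderivWithin ℝ Φ (closedPolydisc n) z v) (polydisc n) := fun z hz => by
    have hnhds := (isOpen_polydisc n).mem_nhds hz
    have hderiv := ((hhol z hz).differentiableAt hnhds).fderiv_restrictScalars ℝ
    simp only [fderivWithin_of_mem_nhds
      (Filter.mem_of_superset hnhds (polydisc_subset_closedPolydisc n)), hderiv,
      ContinuousLinearMap.coe_restrictScalars', map_smul]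
  exact hinterior.of_subset_closure (hcont.clm_apply continuousOn_const)
    ((hcont.clm_apply continuousOn_const).const_smul a) (polydisc_subset_closedPolydisc n)
    (closure_polydisc n).ge hζ

lemma fderivWithin_closedPolydisc_apply (hhol : DifferentiableOn ℂ Φ (polydisc n))
    (hsm : ContDiffOn ℝ 1 Φ (closedPolydisc n)) {ζ : Fin n → ℂ} (hζ : ζ ∈ closedPolydisc n)
    (v : Fin n → ℂ) (i : Fin n) :
    fderivWithin ℝ Φ (closedPolydisc n) ζ v i = ∑ j, jacEntry n Φ ζ i j * v j := by
  conv_lhs => rw [pi_eq_sum_univ' v]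
  simp only [map_sum, fderivWithin_closedPolydisc_smul hhol hsm hζ, Finset.sum_apply,
    Pi.smul_apply, smul_eq_mul, jacEntry, mul_comm]

end Polydisc

section LogJacobian

lemma hasFDerivAtFilter_fderivWithin_of_convex {E F : Type*} [NormedAddCommGroup E]
    [NormedSpace ℝ E] [NormedAddCommGroup F] [NormedSpace ℝ F] {S : Set E} {f : E → F}
    (hS : Convex ℝ S) (hu : UniqueDiffOn ℝ S) (hf : ContDiffOn ℝ 1 f S) {x : E} (hx : x ∈ S) :
    HasFDerivAtFilter f (fderivWithin ℝ f S x) (nhdsWithin x S ×ˢ nhdsWithin x S) := by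
  refine .of_isLittleO (Asymptotics.isLittleO_iff.2 fun κ hκ => ?_)
  obtain ⟨r, hr, hclose⟩ :=
    Metric.continuousWithinAt_iff.1 (hf.continuousOn_fderivWithin hu le_rfl x hx) κ hκ
  have hball : S ∩ ball x r ∈ nhdsWithin x S :=
    Filter.inter_mem self_mem_nhdsWithin (mem_nhdsWithin_of_mem_nhds (ball_mem_nhds x hr))
  filter_upwards [Filter.prod_mem_prod hball hball] with p hp
  refine (hS.inter (convex_ball x r)).norm_image_sub_le_of_norm_hasFDerivWithin_le'
    (f' := fderivWithin ℝ f S) (fun y hy => ?_) (fun y hy => ?_) hp.2 hp.1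
  · exact (hf.differentiableOn one_ne_zero y hy.1).hasFDerivWithinAt.mono inter_subset_left
  · exact (dist_eq_norm (fderivWithin ℝ f S y) _ ▸ hclose hy.1 hy.2).le

variable {n : ℕ} {Φ : (Fin n → ℂ) → Fin n → ℂ} {l₀ : Fin n → ℂ} {i : Fin n}

/-- The product of closed left half-planes, the domain of the logarithmic coordinates `l` on the
closed polydisc, `z j = exp (l j)`. -/
def leftHalfSpace (n : ℕ) : Set (Fin n → ℂ) := {l | ∀ j, (l j).re ≤ 0}

/-- The coordinatewise exponential. -/
def coordExp (l : Fin n → ℂ) : Fin n → ℂ := fun j => Complex.exp (l j)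

/-- The Jacobian matrix at `l₀` of `l ↦ log Φ(exp l)`, the map `Φ` in logarithmic coordinates. -/
def logJacobian (Φ : (Fin n → ℂ) → Fin n → ℂ) (l₀ : Fin n → ℂ) : Matrix (Fin n) (Fin n) ℂ :=
  Matrix.of fun i j => (Φ (coordExp l₀) i)⁻¹ * jacEntry n Φ (coordExp l₀) i j * coordExp l₀ j

/-- The dot product with a complex vector, as a real-linear functional on `ℂⁿ`. -/
def dotProductCLM (a : Fin n → ℂ) : (Fin n → ℂ) →L[ℝ] ℂ :=
  ∑ j, a j • ContinuousLinearMap.proj j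

lemma dotProductCLM_apply (a v : Fin n → ℂ) : dotProductCLM a v = ∑ j, a j * v j := by
  simp [dotProductCLM]

lemma mapsTo_coordExp : MapsTo coordExp (leftHalfSpace n) (closedPolydisc n) := fun l hl j => by
  simpa only [coordExp, Complex.norm_exp] using Real.exp_le_one_iff.2 (hl j)

lemma continuous_coordExp : Continuous (coordExp (n := n)) := by
  unfold coordExp; fun_prop

lemma tendsto_coordExp (l₀ : Fin n → ℂ) :
    Filter.Tendsto coordExp (nhdsWithin l₀ (leftHalfSpace n))
      (nhdsWithin (coordExp l₀) (closedPolydisc n)) :=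
  continuous_coordExp.continuousWithinAt.tendsto_nhdsWithin mapsTo_coordExp

lemma hasStrictFDerivAt_coordExp (l : Fin n → ℂ) :
    HasStrictFDerivAt coordExp
      (ContinuousLinearMap.pi fun j => dotProductCLM (Pi.single j (Complex.exp (l j)))) l := by
  refine hasStrictFDerivAt_pi.2 fun j => ?_
  have hderiv : dotProductCLM (Pi.single j (Complex.exp (l j))) =
      Complex.exp (l j) • ContinuousLinearMap.proj j := by
    ext v; simp [dotProductCLM_apply, Pi.single_apply]
  rw [hderiv]
  exact ((ContinuousLinearMap.proj (R := ℝ) (φ := fun _ : Fin n => ℂ) j).hasStrictFDerivAt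
    (x := l)).cexp

lemma hasStrictFDerivAt_log_inv_mul {z : Fin n → ℂ} (hz : z i ≠ 0) :
    HasStrictFDerivAt (fun w : Fin n → ℂ => Complex.log ((z i)⁻¹ * w i))
      (dotProductCLM (Pi.single i (z i)⁻¹)) z := by
  have hproj : HasStrictFDerivAt (fun w : Fin n → ℂ => w i)
      (ContinuousLinearMap.proj (R := ℂ) i) z :=
    (ContinuousLinearMap.proj (R := ℂ) (φ := fun _ : Fin n => ℂ) i).hasStrictFDerivAt
  have hderiv : dotProductCLM (Pi.single i (z i)⁻¹) =
      (((z i)⁻¹ * z i)⁻¹ • (z i)⁻¹ • ContinuousLinearMap.proj (R := ℂ) i).restrictScalars ℝ := by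
    ext v; simp [dotProductCLM_apply, Pi.single_apply, hz]
  rw [hderiv]
  exact ((hproj.const_mul (z i)⁻¹).clog (by simp [hz])).restrictScalars ℝ

lemma hasFDerivAtFilter_log_comp_coordExp (hhol : DifferentiableOn ℂ Φ (polydisc n))
    (hsm : ContDiffOn ℝ 1 Φ (closedPolydisc n)) (hl₀ : l₀ ∈ leftHalfSpace n)
    (hne : Φ (coordExp l₀) i ≠ 0) :
    HasFDerivAtFilter (fun l => Complex.log ((Φ (coordExp l₀) i)⁻¹ * Φ (coordExp l) i))
      (dotProductCLM (logJacobian Φ l₀ i))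
      (nhdsWithin l₀ (leftHalfSpace n) ×ˢ nhdsWithin l₀ (leftHalfSpace n)) := by
  have hζ := mapsTo_coordExp hl₀
  have htend := tendsto_coordExp l₀
  have htendΦ := (hsm.continuousOn _ hζ).tendsto.comp htend
  have hexp := HasFDerivAtFilter.mono (hasStrictFDerivAt_coordExp l₀) <| nhds_prod_eq.ge.trans' <|
    Filter.prod_mono (nhdsWithin_le_nhds (s := leftHalfSpace n))
      (nhdsWithin_le_nhds (s := leftHalfSpace n))
  have hcomp := (hasFDerivAtFilter_fderivWithin_of_convex (convex_closedPolydisc n)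
    (uniqueDiffOn_closedPolydisc n) hsm hζ).comp hexp (htend.prodMap htend)
  have hlog := HasFDerivAtFilter.comp (hasStrictFDerivAt_log_inv_mul hne) hcomp
    (by simpa only [nhds_prod_eq] using htendΦ.prodMap htendΦ)
  have hderiv : dotProductCLM (logJacobian Φ l₀ i) =
      (dotProductCLM (Pi.single i (Φ (coordExp l₀) i)⁻¹)).comp
        ((fderivWithin ℝ Φ (closedPolydisc n) (coordExp l₀)).comp
          (.pi fun j => dotProductCLM (Pi.single j (Complex.exp (l₀ j))))) := by
    ext v
    simp [dotProductCLM_apply, fderivWithin_closedPolydisc_apply hhol hsm hζ, Pi.single_apply,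
      logJacobian, Finset.mul_sum, mul_assoc, coordExp]
  exact hderiv ▸ hlog

lemma re_log_inv_mul_coordExp_nonpos (hsm : ContDiffOn ℝ 1 Φ (closedPolydisc n))
    (hmap : MapsTo Φ (polydisc n) (polydisc n)) (hi : ‖Φ (coordExp l₀) i‖ = 1)
    {l : Fin n → ℂ} (hl : l ∈ leftHalfSpace n) :
    (Complex.log ((Φ (coordExp l₀) i)⁻¹ * Φ (coordExp l) i)).re ≤ 0 := by
  rw [Complex.log_re, norm_mul, norm_inv, hi, inv_one, one_mul]
  exact Real.log_nonpos (norm_nonneg _)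
    (mapsTo_closedPolydisc hsm.continuousOn hmap (mapsTo_coordExp hl) i)

lemma re_dotProductCLM_logJacobian_nonpos (hhol : DifferentiableOn ℂ Φ (polydisc n))
    (hsm : ContDiffOn ℝ 1 Φ (closedPolydisc n)) (hmap : MapsTo Φ (polydisc n) (polydisc n))
    (hl₀ : ∀ j, (l₀ j).re = 0) (hi : ‖Φ (coordExp l₀) i‖ = 1) {v : Fin n → ℂ}
    (hv : v ∈ leftHalfSpace n) : (dotProductCLM (logJacobian Φ l₀ i) v).re ≤ 0 := by
  have hne : Φ (coordExp l₀) i ≠ 0 := norm_ne_zero_iff.1 (hi ▸ one_ne_zero)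
  have hmem : l₀ ∈ leftHalfSpace n := fun j => (hl₀ j).le
  have hmax : IsLocalMaxOn
      (fun l => Complex.reCLM (Complex.log ((Φ (coordExp l₀) i)⁻¹ * Φ (coordExp l) i)))
      (leftHalfSpace n) l₀ := by
    filter_upwards [self_mem_nhdsWithin] with l hl
    simpa [hne] using re_log_inv_mul_coordExp_nonpos hsm hmap hi hl
  have hderiv : HasFDerivWithinAt
      (fun l => Complex.log ((Φ (coordExp l₀) i)⁻¹ * Φ (coordExp l) i))
      (dotProductCLM (logJacobian Φ l₀ i)) (leftHalfSpace n) l₀ :=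
    (hasFDerivAtFilter_log_comp_coordExp hhol hsm hmem hne).mono
      (Filter.prod_mono le_rfl (pure_le_nhdsWithin hmem))
  refine hmax.hasFDerivWithinAt_nonpos
    (Complex.reCLM.hasFDerivAt.comp_hasFDerivWithinAt l₀ hderiv)
    (mem_posTangentConeAt_of_segment_subset ?_)
  rintro _ ⟨a, b, -, hb, -, rfl⟩ j
  simpa [hl₀] using mul_nonpos_of_nonneg_of_nonpos hb (hv j)

-- `log |Φ i(exp l)|` is maximal at `l₀` over the left half-planes, so its tangential derivatives
-- vanish and its outward normal derivatives are nonnegative.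
lemma exists_nonneg_logJacobian_eq (hhol : DifferentiableOn ℂ Φ (polydisc n))
    (hsm : ContDiffOn ℝ 1 Φ (closedPolydisc n)) (hmap : MapsTo Φ (polydisc n) (polydisc n))
    (hl₀ : ∀ j, (l₀ j).re = 0) (hi : ‖Φ (coordExp l₀) i‖ = 1) (j : Fin n) :
    ∃ b : ℝ, 0 ≤ b ∧ logJacobian Φ l₀ i j = b := by
  have hdir (a : ℂ) (ha : a.re ≤ 0) : (logJacobian Φ l₀ i j * a).re ≤ 0 := by
    have hsingle : (Pi.single j a : Fin n → ℂ) ∈ leftHalfSpace n := fun k => by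
      rcases eq_or_ne k j with rfl | hk <;> simp [*]
    simpa [dotProductCLM_apply, Pi.single_apply] using
      re_dotProductCLM_logJacobian_nonpos hhol hsm hmap hl₀ hi hsingle
  have hI := hdir Complex.I (by simp)
  have hnegI := hdir (-Complex.I) (by simp)
  have hneg := hdir (-1) (by simp)
  simp only [mul_neg, mul_one, Complex.neg_re, Complex.mul_I_re, neg_neg] at hI hnegI hneg
  exact ⟨_, neg_nonpos.1 hneg, Complex.ext rfl (le_antisymm hnegI (neg_nonpos.1 hI))⟩

lemma linearIndependent_logJacobian_row (hrank : rankCond n Φ) (hl₀ : ∀ j, (l₀ j).re = 0)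
    {I : Finset (Fin n)} (hI : ∀ i ∈ I, ‖Φ (coordExp l₀) i‖ = 1) :
    LinearIndependent ℂ fun i : I => logJacobian Φ l₀ i := by
  rcases I.eq_empty_or_nonempty with rfl | hne
  · exact linearIndependent_empty_type
  have htorus : coordExp l₀ ∈ torus n := fun j => by simp [coordExp, Complex.norm_exp, hl₀]
  let J : Matrix I (Fin n) ℂ := .of fun i j => jacEntry n Φ (coordExp l₀) i j
  have hΦ : IsUnit (Matrix.diagonal fun i : I => (Φ (coordExp l₀) i)⁻¹).det :=
    (Matrix.isUnit_iff_isUnit_det _).1 <| Matrix.isUnit_diagonal.2 <| Pi.isUnit_iff.2 fun i =>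
      (inv_ne_zero (norm_ne_zero_iff.1 (hI i i.2 ▸ one_ne_zero))).isUnit
  have hexp : IsUnit (Matrix.diagonal (coordExp l₀)).det :=
    (Matrix.isUnit_iff_isUnit_det _).1 <| Matrix.isUnit_diagonal.2 <| Pi.isUnit_iff.2 fun j =>
      (Complex.exp_ne_zero _).isUnit
  have hfactor : (fun i : I => logJacobian Φ l₀ i) =
      (Matrix.diagonal (fun i : I => (Φ (coordExp l₀) i)⁻¹) * J *
        Matrix.diagonal (coordExp l₀)).row := by
    ext i j; simp [logJacobian, J, Matrix.mul_diagonal, Matrix.diagonal_mul]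
  rw [hfactor, linearIndependent_iff_card_eq_finrank_span, Set.finrank,
    ← Matrix.rank_eq_finrank_span_row, Matrix.rank_mul_eq_left_of_isUnit_det _ _ hexp,
    Matrix.rank_mul_eq_right_of_isUnit_det _ _ hΦ, hrank I hne _ htorus hI, Fintype.card_coe]

lemma exists_basis_eqOn {ι K V : Type*} [Finite ι] [DivisionRing K] [AddCommGroup V] [Module K V]
    (b₀ : Module.Basis ι K V) {v : ι → V} {s : Finset ι}
    (hv : LinearIndependent K fun i : s => v i) :
    ∃ b : Module.Basis ι K V, ∀ i ∈ s, b i = v i := by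
  classical
  have := Fintype.ofFinite ι
  let b := Module.Basis.sumExtend hv
  have hb (i : s) : b (Sum.inl i) = v i := by
    simp only [b, Module.Basis.sumExtend, Module.Basis.reindex_apply,
      Module.Basis.extend_apply_self]
    rfl
  let e₀ := b.indexEquiv b₀
  have : Finite (s ⊕ Module.Basis.sumExtendIndex hv) := .of_equiv _ e₀.symm
  have : Fintype (Module.Basis.sumExtendIndex hv) :=
    @Fintype.ofFinite _ (.of_injective (Sum.inr : _ → s ⊕ _) Sum.inr_injective)
  have hcard : Fintype.card (Module.Basis.sumExtendIndex hv) = Fintype.card {i // i ∉ s} := by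
    have h := Fintype.card_congr (e₀.trans (Equiv.sumCompl (· ∈ s)).symm)
    rwa [Fintype.card_sum, Fintype.card_sum, Nat.add_left_cancel_iff] at h
  let e := (Equiv.sumCongr (.refl s) (Fintype.equivOfCardEq hcard)).trans (.sumCompl (· ∈ s))
  refine ⟨b.reindex e, fun i hi => ?_⟩
  have he : e.symm i = Sum.inl ⟨i, hi⟩ := by rw [Equiv.symm_apply_eq]; simp [e]
  rw [Module.Basis.reindex_apply, he, hb]

lemma exists_isUnit_logJacobian_eq (hhol : DifferentiableOn ℂ Φ (polydisc n))
    (hsm : ContDiffOn ℝ 1 Φ (closedPolydisc n)) (hmap : MapsTo Φ (polydisc n) (polydisc n))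
    (hrank : rankCond n Φ) (hl₀ : ∀ j, (l₀ j).re = 0) :
    ∃ B : Matrix (Fin n) (Fin n) ℝ, IsUnit B ∧ ∀ i, ‖Φ (coordExp l₀) i‖ = 1 →
      ∀ j, 0 ≤ B i j ∧ logJacobian Φ l₀ i j = B i j := by
  let I : Finset (Fin n) := {i | ‖Φ (coordExp l₀) i‖ = 1}
  have hI : ∀ i ∈ I, ‖Φ (coordExp l₀) i‖ = 1 := fun i hi => (Finset.mem_filter.1 hi).2
  choose! b hb0 hb using fun i (hi : i ∈ I) =>
    exists_nonneg_logJacobian_eq hhol hsm hmap hl₀ (hI i hi)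
  have hrows : LinearIndependent ℝ fun i : I => b i := by
    refine .of_comp (Complex.ofRealCLM.toLinearMap.compLeft (Fin n)) ?_
    convert (linearIndependent_logJacobian_row hrank hl₀ hI).restrict_scalars' ℝ using 2 with i
    exact funext fun j => (hb i i.2 j).symm
  obtain ⟨B, hB⟩ := exists_basis_eqOn (Pi.basisFun ℝ (Fin n)) hrows
  refine ⟨.of B, Matrix.linearIndependent_rows_iff_isUnit.1 B.linearIndependent, fun i hi j => ?_⟩
  have hiI : i ∈ I := by simpa [I] using hi
  simpa [hB i hiI] using And.intro (hb0 i hiI j) (hb i hiI j)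

lemma exists_perm_apply_ne_zero {ι R : Type*} [Fintype ι] [DecidableEq ι] [CommRing R]
    {B : Matrix ι ι R} (hB : B.det ≠ 0) : ∃ σ : Equiv.Perm ι, ∀ i, B i (σ i) ≠ 0 := by
  rw [← Matrix.det_transpose, Matrix.det_apply] at hB
  obtain ⟨σ, -, hσ⟩ := Finset.exists_ne_zero_of_sum_ne_zero hB
  refine ⟨σ, fun i h => hσ ?_⟩
  rw [Finset.prod_eq_zero (Finset.mem_univ i) (by exact h), smul_zero]

end LogJacobian

section LocalEstimate

variable {n : ℕ} {Φ : (Fin n → ℂ) → Fin n → ℂ} {l₀ : Fin n → ℂ}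
  {B : Matrix (Fin n) (Fin n) ℝ} {c s x : ℝ} {w : ℂ} {t θ : Fin n → ℝ}

lemma exp_neg_two_mul_lt_one_sub (hx : 0 < x) (hx' : x < 1 / 2) : Real.exp (-(2 * x)) < 1 - x := by
  rw [Real.exp_neg, inv_lt_comm₀ (Real.exp_pos _) (by linarith)]
  refine lt_of_lt_of_le ?_ (Real.add_one_le_exp _)
  rw [inv_lt_iff_one_lt_mul₀ (by linarith)]
  nlinarith

lemma circleMap_mem_stolzRegion {R : ℝ} (hR : 0 ≤ R) (hRs : R < s) (hs : 1 / 2 ≤ s)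
    (hc : c ≤ 1 / 4) : circleMap 0 R x ∈ stolzRegion c s x := by
  refine ⟨by rwa [norm_circleMap_zero, abs_of_nonneg hR], fun y => ?_⟩
  have hradial : s - R ≤ ‖circleMap 0 R x - circleMap 0 s y‖ := by
    have h := norm_sub_norm_le (circleMap 0 s y) (circleMap 0 R x)
    rwa [norm_circleMap_zero, norm_circleMap_zero, abs_of_nonneg hR,
      abs_of_nonneg (hR.trans hRs.le), norm_sub_rev] at h
  have hscale : s * ‖circleMap 0 1 x - circleMap 0 1 y‖ =
      ‖circleMap 0 s x - circleMap 0 s y‖ := by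
    have hs0 : ‖(s : ℂ)‖ = s := by rw [Complex.norm_real, Real.norm_of_nonneg (hR.trans hRs.le)]
    nth_rewrite 1 [← hs0]
    rw [← norm_mul]
    simp only [circleMap_zero, Complex.ofReal_one, one_mul, mul_sub]
  have htri := norm_sub_le_norm_sub_add_norm_sub (circleMap 0 s x) (circleMap 0 R x)
    (circleMap 0 s y)
  have hdiff := norm_circleMap_sub_circleMap_le s R x x
  rw [sub_self, norm_zero, mul_zero, add_zero, abs_of_pos (sub_pos.2 hRs)] at hdiff
  nlinarith [norm_nonneg (circleMap 0 1 x - circleMap 0 1 y)]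

lemma mem_stolzRegion_of_norm_add_le (hc : 0 < c) (hw : ‖w‖ + 2 * c ≤ s) :
    w ∈ stolzRegion c s x := by
  refine ⟨by linarith, fun y => ?_⟩
  have hs : 0 ≤ s := by linarith [norm_nonneg w]
  have hchord := norm_sub_le (circleMap 0 1 x) (circleMap 0 1 y)
  have hdist := norm_sub_norm_le (circleMap 0 s y) w
  simp only [norm_circleMap_zero, abs_one, abs_of_nonneg hs] at hchord hdist
  rw [norm_sub_rev w]
  nlinarith

/-- The logarithmic coordinates of the point with polar coordinates `1 - t j` and `θ j`. -/
def logPoint (t θ : Fin n → ℝ) : Fin n → ℂ := fun j => Real.log (1 - t j) + θ j * Complex.I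

lemma coordExp_logPoint (ht : ∀ j, t j < 1) : coordExp (logPoint t θ) = torusMap 0 (1 - t) θ := by
  ext j
  simp [coordExp, logPoint, torusMap, Complex.exp_add, ← Complex.ofReal_exp,
    Real.exp_log (sub_pos.2 (ht j))]

lemma logPoint_mem_leftHalfSpace (ht : ∀ j, t j ∈ Ico 0 1) :
    logPoint t θ ∈ leftHalfSpace n := fun j => by
  simpa [logPoint] using Real.log_nonpos (by linarith [(ht j).2]) (by linarith [(ht j).1])

lemma exists_approximatesLinearOn_of_hasFDerivAtFilter {E F : Type*} [NormedAddCommGroup E]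
    [NormedSpace ℝ E] [NormedAddCommGroup F] [NormedSpace ℝ F] {f : E → F} {f' : E →L[ℝ] F}
    {L : Filter E} (hf : HasFDerivAtFilter f f' (L ×ˢ L)) {κ : NNReal} (hκ : 0 < κ) :
    ∃ S ∈ L, ApproximatesLinearOn f f' S κ := by
  obtain ⟨S, hS, happrox⟩ := Filter.eventually_prod_self_iff
    (r := fun l l' => ‖f l - f l' - f' (l - l')‖ ≤ κ * ‖l - l'‖) |>.1
    (Asymptotics.isLittleO_iff.1 hf.isLittleO (NNReal.coe_pos.2 hκ))
  exact ⟨S, hS, fun l hl m hm => happrox l hl m hm⟩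

/-- Logarithmic coordinates of `Φ` near `l₀`, normalized to vanish at `l₀`. The coordinates of `Φ`
which are not unimodular at `exp l₀`, and whose logarithm is of no use, are replaced by linear forms
given by the rows of `B`. -/
def logChart (Φ : (Fin n → ℂ) → Fin n → ℂ) (l₀ : Fin n → ℂ) (B : Matrix (Fin n) (Fin n) ℝ)
    (l : Fin n → ℂ) (i : Fin n) : ℂ :=
  if ‖Φ (coordExp l₀) i‖ = 1 then Complex.log ((Φ (coordExp l₀) i)⁻¹ * Φ (coordExp l) i)
  else dotProductCLM (fun j => (B i j : ℂ)) (l - l₀)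

/-- The real-linear map `ℂⁿ → ℂⁿ` given by a real matrix, the derivative of `logChart`. -/
def realMatrixCLM (B : Matrix (Fin n) (Fin n) ℝ) : (Fin n → ℂ) →L[ℝ] Fin n → ℂ :=
  .pi fun i => dotProductCLM fun j => (B i j : ℂ)

lemma realMatrixCLM_single (k : Fin n) (a : ℂ) (i : Fin n) :
    realMatrixCLM B (Pi.single k a) i = B i k * a := by
  simp [realMatrixCLM, dotProductCLM_apply, Pi.single_apply]

lemma logChart_self : logChart Φ l₀ B l₀ = 0 := by
  ext i
  by_cases hi : ‖Φ (coordExp l₀) i‖ = 1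
  · have hne : Φ (coordExp l₀) i ≠ 0 := norm_ne_zero_iff.1 (hi ▸ one_ne_zero)
    simp [logChart, hne]
  · simp [logChart, hi]

lemma hasFDerivAtFilter_logChart (hhol : DifferentiableOn ℂ Φ (polydisc n))
    (hsm : ContDiffOn ℝ 1 Φ (closedPolydisc n)) (hl₀ : l₀ ∈ leftHalfSpace n)
    (hB : ∀ i, ‖Φ (coordExp l₀) i‖ = 1 → ∀ j, logJacobian Φ l₀ i j = B i j) :
    HasFDerivAtFilter (logChart Φ l₀ B) (realMatrixCLM B)
      (nhdsWithin l₀ (leftHalfSpace n) ×ˢ nhdsWithin l₀ (leftHalfSpace n)) := by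
  refine hasFDerivAtFilter_pi.2 fun i => ?_
  by_cases hi : ‖Φ (coordExp l₀) i‖ = 1
  · have hne : Φ (coordExp l₀) i ≠ 0 := norm_ne_zero_iff.1 (hi ▸ one_ne_zero)
    have hrow : (fun j => (B i j : ℂ)) = logJacobian Φ l₀ i := funext fun j => (hB i hi j).symm
    simpa only [logChart, hi, if_true, hrow] using
      hasFDerivAtFilter_log_comp_coordExp hhol hsm hl₀ hne
  · simp only [logChart, hi, if_false, map_sub]
    exact (ContinuousLinearMap.hasFDerivAtFilter _).sub_const _

/-- The boundary value of those coordinates of `Φ` which are unimodular at `exp l₀`, and `1` in the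
other coordinates. -/
def boundaryValue (Φ : (Fin n → ℂ) → Fin n → ℂ) (l₀ : Fin n → ℂ) (i : Fin n) : ℂ :=
  if ‖Φ (coordExp l₀) i‖ = 1 then Φ (coordExp l₀) i else 1

lemma norm_boundaryValue (i : Fin n) : ‖boundaryValue Φ l₀ i‖ = 1 := by
  unfold boundaryValue; split_ifs with hi <;> simp [hi]

/-- A set `S` in logarithmic coordinates on which `logChart Φ l₀ B` is a good chart: it is linear up
to an error `c`, its values avoid the cut of the logarithm, and the coordinates of `Φ` which are not
unimodular at `exp l₀` stay at distance `3 * c` from the unit circle. -/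
structure IsLogPatch (Φ : (Fin n → ℂ) → Fin n → ℂ) (l₀ : Fin n → ℂ)
    (B : Matrix (Fin n) (Fin n) ℝ) (c : NNReal) (S : Set (Fin n → ℂ)) : Prop where
  approx : ApproximatesLinearOn (logChart Φ l₀ B) (realMatrixCLM B) S c
  norm_lt_pi : ∀ l ∈ S, ∀ i, ‖logChart Φ l₀ B l i‖ < Real.pi
  ne_zero : ∀ l ∈ S, ∀ i, ‖Φ (coordExp l₀) i‖ = 1 → Φ (coordExp l) i ≠ 0
  norm_add_lt : ∀ l ∈ S, ∀ i, ‖Φ (coordExp l₀) i‖ ≠ 1 → ‖Φ (coordExp l) i‖ + 3 * c < 1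

lemma exists_isLogPatch (hhol : DifferentiableOn ℂ Φ (polydisc n))
    (hsm : ContDiffOn ℝ 1 Φ (closedPolydisc n)) (hl₀ : l₀ ∈ leftHalfSpace n)
    (hB : ∀ i, ‖Φ (coordExp l₀) i‖ = 1 → ∀ j, logJacobian Φ l₀ i j = B i j) {c : NNReal}
    (hc0 : 0 < c) (hc : ∀ i, ‖Φ (coordExp l₀) i‖ ≠ 1 → ‖Φ (coordExp l₀) i‖ + 3 * c < 1) :
    ∃ S ∈ nhdsWithin l₀ (leftHalfSpace n), IsLogPatch Φ l₀ B c S := by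
  have hderiv := hasFDerivAtFilter_logChart hhol hsm hl₀ hB
  obtain ⟨S, hS, happrox⟩ := exists_approximatesLinearOn_of_hasFDerivAtFilter hderiv hc0
  have hchart (i : Fin n) : Filter.Tendsto (logChart Φ l₀ B · i)
      (nhdsWithin l₀ (leftHalfSpace n)) (nhds 0) := by
    have h := HasFDerivAtFilter.tendsto_nhds inf_le_left
      (hderiv.mono (Filter.prod_mono le_rfl (pure_le_nhdsWithin hl₀)))
    rw [logChart_self] at h
    exact tendsto_pi_nhds.1 h i
  have hΦ (i : Fin n) : Filter.Tendsto (fun l => Φ (coordExp l) i)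
      (nhdsWithin l₀ (leftHalfSpace n)) (nhds (Φ (coordExp l₀) i)) :=
    tendsto_pi_nhds.1 ((hsm.continuousOn _ (mapsTo_coordExp hl₀)).tendsto.comp
      (tendsto_coordExp l₀)) i
  have hpi (i : Fin n) := (hchart i).norm.eventually_lt_const (norm_zero.trans_lt Real.pi_pos)
  have hne (i : Fin n) : ∀ᶠ l in nhdsWithin l₀ (leftHalfSpace n),
      ‖Φ (coordExp l₀) i‖ = 1 → Φ (coordExp l) i ≠ 0 := by
    simp only [Filter.eventually_imp_distrib_left]
    exact fun hi => (hΦ i).eventually_ne (norm_ne_zero_iff.1 (hi ▸ one_ne_zero))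
  have hlt (i : Fin n) : ∀ᶠ l in nhdsWithin l₀ (leftHalfSpace n),
      ‖Φ (coordExp l₀) i‖ ≠ 1 → ‖Φ (coordExp l) i‖ + 3 * c < 1 := by
    simp only [Filter.eventually_imp_distrib_left]
    exact fun hi => ((hΦ i).norm.add_const (3 * c : ℝ)).eventually_lt_const (hc i hi)
  refine ⟨_, Filter.inter_mem hS <| Filter.inter_mem (Filter.eventually_all.2 hpi) <|
    Filter.inter_mem (Filter.eventually_all.2 hne) (Filter.eventually_all.2 hlt),
    happrox.mono_set inter_subset_left, fun l hl => hl.2.1, fun l hl => hl.2.2.1,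
    fun l hl => hl.2.2.2⟩

namespace IsLogPatch

variable {c : NNReal} {S : Set (Fin n → ℂ)}

lemma re_logChart_le (hS : IsLogPatch Φ l₀ B c S) (hsm : ContDiffOn ℝ 1 Φ (closedPolydisc n))
    (hmap : MapsTo Φ (polydisc n) (polydisc n)) (ht : ∀ j, t j ∈ Ico 0 1) {i k : Fin n}
    (hi : ‖Φ (coordExp l₀) i‖ = 1) (hc : c ≤ B i k) (hmem : logPoint t θ ∈ S)
    (hmem' : logPoint (Function.update t k 0) θ ∈ S) :
    (logChart Φ l₀ B (logPoint t θ) i).re ≤ -((B i k - c) * t k) := by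
  have hk := (ht k).2
  have hlog : Real.log (1 - t k) ≤ -t k := by linarith [Real.log_le_sub_one_of_pos (sub_pos.2 hk)]
  have hdiff : logPoint t θ - logPoint (Function.update t k 0) θ =
      Pi.single k (Real.log (1 - t k) : ℂ) := by
    ext j
    rcases eq_or_ne j k with rfl | hj <;> simp [logPoint, *]
  have hedge : (logChart Φ l₀ B (logPoint (Function.update t k 0) θ) i).re ≤ 0 := by
    simp only [logChart, hi, if_true]
    refine re_log_inv_mul_coordExp_nonpos hsm hmap hi (logPoint_mem_leftHalfSpace fun j => ?_)
    rcases eq_or_ne j k with rfl | hj <;> simp [*]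
  have happrox := (norm_le_pi_norm _ i).trans (hS.approx _ hmem _ hmem')
  rw [hdiff, Pi.norm_single, Complex.norm_real, Real.norm_of_nonpos (by linarith [(ht k).1])]
    at happrox
  have hre := (Complex.re_le_norm _).trans happrox
  simp only [Pi.sub_apply, realMatrixCLM_single, Complex.sub_re, Complex.re_ofReal_mul,
    Complex.ofReal_re] at hre
  nlinarith

lemma mem_stolzRegion (hS : IsLogPatch Φ l₀ B c S) (hsm : ContDiffOn ℝ 1 Φ (closedPolydisc n))
    (hmap : MapsTo Φ (polydisc n) (polydisc n)) (hc : 0 < c) (hc' : c ≤ 1 / 8)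
    (ht : ∀ j, t j ∈ Ico 0 1) {i k : Fin n} (htk : 0 < t k)
    (hB : ‖Φ (coordExp l₀) i‖ = 1 → 3 * c ≤ B i k) (hmem : logPoint t θ ∈ S)
    (hmem' : logPoint (Function.update t k 0) θ ∈ S) :
    (boundaryValue Φ l₀ i)⁻¹ * Φ (coordExp (logPoint t θ)) i ∈
      stolzRegion c (1 - c * t k) (logChart Φ l₀ B (logPoint t θ) i).im := by
  have htk' := (ht k).2
  by_cases hi : ‖Φ (coordExp l₀) i‖ = 1
  · set N := logChart Φ l₀ B (logPoint t θ) i with hN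
    have hexp : (boundaryValue Φ l₀ i)⁻¹ * Φ (coordExp (logPoint t θ)) i =
        circleMap 0 (Real.exp N.re) N.im := by
      have hprod : (Φ (coordExp l₀) i)⁻¹ * Φ (coordExp (logPoint t θ)) i ≠ 0 :=
        mul_ne_zero (inv_ne_zero (norm_ne_zero_iff.1 (hi ▸ one_ne_zero))) (hS.ne_zero _ hmem i hi)
      rw [circleMap_zero, Complex.ofReal_exp, ← Complex.exp_add, Complex.re_add_im, hN]
      simp only [boundaryValue, logChart, hi, if_true, Complex.exp_log hprod]
    have hre := hS.re_logChart_le hsm hmap ht hi (by linarith [hB hi]) hmem hmem'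
    have hdecay : Real.exp N.re < 1 - c * t k := by
      refine (Real.exp_le_exp.2 ?_).trans_lt
        (exp_neg_two_mul_lt_one_sub (mul_pos hc htk) (by nlinarith))
      exact hre.trans (by nlinarith [hB hi])
    rw [hexp]
    exact circleMap_mem_stolzRegion (Real.exp_pos _).le hdecay (by nlinarith) (by linarith)
  · have hsmall := hS.norm_add_lt _ hmem i hi
    simp only [boundaryValue, hi, if_false, inv_one, one_mul]
    exact mem_stolzRegion_of_norm_add_le hc (by nlinarith)

lemma approximatesLinearOn_im (hS : IsLogPatch Φ l₀ B c S)
    {E : (Fin n → ℝ) →L[ℝ] Fin n → ℝ} (hE : ∀ v, E v = B.mulVec v) {V : Set (Fin n → ℝ)}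
    (hV : ∀ θ ∈ V, logPoint t θ ∈ S) :
    ApproximatesLinearOn (fun θ i => (logChart Φ l₀ B (logPoint t θ) i).im) E V c := by
  intro θ hθ θ' hθ'
  have hdiff : logPoint t θ - logPoint t θ' = fun j => ((θ - θ') j : ℂ) * Complex.I := by
    ext j; simp [logPoint, sub_mul]
  have hnorm : ‖logPoint t θ - logPoint t θ'‖ = ‖θ - θ'‖ := by
    simp only [hdiff, Pi.norm_def, nnnorm_mul, Complex.nnnorm_I, mul_one, Complex.nnnorm_real]
  refine (pi_norm_le_iff_of_nonneg (by positivity)).2 fun i => ?_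
  have happrox := (norm_le_pi_norm _ i).trans (hS.approx _ (hV θ hθ) _ (hV θ' hθ'))
  rw [hnorm, hdiff] at happrox
  refine le_trans ?_ ((Complex.abs_im_le_norm _).trans happrox)
  simp [hE, Matrix.mulVec, dotProduct, realMatrixCLM, dotProductCLM_apply]

lemma lintegral_sq_comp_le (hS : IsLogPatch Φ l₀ B c S)
    (hsm : ContDiffOn ℝ 1 Φ (closedPolydisc n)) (hmap : MapsTo Φ (polydisc n) (polydisc n))
    (hc : 0 < c) (hc' : (c : ℝ) ≤ 1 / 8) {σ : Equiv.Perm (Fin n)}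
    (hB : ∀ i, ‖Φ (coordExp l₀) i‖ = 1 → 3 * c ≤ B i (σ i))
    {E : (Fin n → ℝ) ≃L[ℝ] Fin n → ℝ} (hE : ∀ v, E v = B.mulVec v)
    (hcE : Subsingleton (Fin n → ℝ) ∨ c < ‖(E.symm : (Fin n → ℝ) →L[ℝ] Fin n → ℝ)‖₊⁻¹)
    (ht : ∀ j, t j ∈ Ioo 0 1) {V : Set (Fin n → ℝ)} (hV : MeasurableSet V)
    (hmem : ∀ θ ∈ V, logPoint t θ ∈ S)
    (hmem' : ∀ θ ∈ V, ∀ k, logPoint (Function.update t k 0) θ ∈ S)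
    {f : (Fin n → ℂ) → ℂ} (hf : DifferentiableOn ℂ f (polydisc n)) :
    ∫⁻ θ in V, ‖f (Φ (torusMap 0 (1 - t) θ))‖ₑ ^ 2 ≤
      stolzConst c (‖(E.symm : (Fin n → ℝ) →L[ℝ] Fin n → ℝ)‖₊⁻¹ - c)⁻¹ ^ n *
      hardyMean (fun z => f (boundaryValue Φ l₀ * z)) (fun i => 1 - c * t (σ i)) := by
  have hcR0 : (0 : ℝ) < c := hc
  have happrox := hS.approximatesLinearOn_im (E := E) hE hmem
  have hbox : MapsTo (fun θ i => (logChart Φ l₀ B (logPoint t θ) i).im) V (angleBox n) :=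
    fun θ hθ i _ =>
      abs_lt.1 ((Complex.abs_im_le_norm _).trans_lt (hS.norm_lt_pi _ (hmem θ hθ) i))
  have hstolz : ∀ θ ∈ V, ∀ i,
      ((boundaryValue Φ l₀)⁻¹ * Φ (torusMap 0 (1 - t) θ)) i ∈
        stolzRegion c (1 - c * t (σ i)) (logChart Φ l₀ B (logPoint t θ) i).im := fun θ hθ i => by
    rw [← coordExp_logPoint fun j => (ht j).2]
    exact hS.mem_stolzRegion hsm hmap hcR0 hc' (fun j => ⟨(ht j).1.le, (ht j).2⟩) (ht _).1 (hB i)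
      (hmem θ hθ) (hmem' θ hθ _)
  have hcancel (θ : Fin n → ℝ) : boundaryValue Φ l₀ *
      ((boundaryValue Φ l₀)⁻¹ * Φ (torusMap 0 (1 - t) θ)) = Φ (torusMap 0 (1 - t) θ) := by
    ext i
    exact mul_inv_cancel_left₀ (norm_ne_zero_iff.1 (by simp [norm_boundaryValue])) _
  have hest := lintegral_sq_le_hardyMean
    (differentiableOn_comp_mul (norm_boundaryValue (Φ := Φ) (l₀ := l₀)) hf)
    (fun i => by nlinarith [(ht (σ i)).1, (ht (σ i)).2])
    (fun i => by nlinarith [(ht (σ i)).1, (ht (σ i)).2]) hcR0 (by linarith) hV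
    happrox.continuousOn (happrox.antilipschitz hcE) hbox hstolz
  simpa only [hcancel] using hest

end IsLogPatch

lemma exists_nhds_forall_logPoint_mem {θ₀ : Fin n → ℝ} {S : Set (Fin n → ℂ)}
    (hS : S ∈ nhdsWithin (logPoint 0 θ₀) (leftHalfSpace n)) :
    ∃ ρ ∈ Ioc (0 : ℝ) 1, ∀ θ ∈ ball θ₀ ρ, ∀ t : Fin n → ℝ, (∀ j, t j ∈ Ico 0 ρ) →
      logPoint t θ ∈ S := by
  have hcont : ContinuousAt (fun p : (Fin n → ℝ) × (Fin n → ℝ) => logPoint p.1 p.2) (0, θ₀) := by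
    refine continuousAt_pi.2 fun j => ?_
    have hne : (1 : ℝ) - (0 : Fin n → ℝ) j ≠ 0 := by simp
    unfold logPoint
    fun_prop (disch := exact hne)
  obtain ⟨U, hU, hUS⟩ := mem_nhdsWithin_iff_exists_mem_nhds_inter.1 hS
  obtain ⟨ρ, hρ, hball⟩ := Metric.mem_nhds_iff.1 (hcont hU)
  refine ⟨min ρ 1, ⟨lt_min hρ one_pos, min_le_right _ _⟩,
    fun θ hθ t ht => hUS ⟨@hball (t, θ) ?_, ?_⟩⟩
  · rw [← ball_prod_same]
    refine ⟨mem_ball_zero_iff.2 ((pi_norm_lt_iff hρ).2 fun j => ?_),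
      ball_subset_ball (min_le_left _ _) hθ⟩
    rw [Real.norm_of_nonneg (ht j).1]
    exact (ht j).2.trans_le (min_le_left _ _)
  · exact logPoint_mem_leftHalfSpace fun j => ⟨(ht j).1, (ht j).2.trans_le (min_le_right _ _)⟩

lemma exists_patchConst {ι : Type*} [Finite ι] {a b : ι → ℝ} (ha : ∀ i, a i = 1 → 0 < b i)
    (ha' : ∀ i, a i ≤ 1) {E : Type*} [NormedAddCommGroup E] [NormedSpace ℝ E] (e : E ≃L[ℝ] E) :
    ∃ c : NNReal, 0 < c ∧ (c : ℝ) ≤ 1 / 8 ∧ (Subsingleton E ∨ c < ‖(e.symm : E →L[ℝ] E)‖₊⁻¹) ∧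
      (∀ i, a i = 1 → 3 * c ≤ b i) ∧ ∀ i, a i ≠ 1 → a i + 3 * c < 1 := by
  have hsmall {r : ℝ} (hr : 0 < r) : ∀ᶠ c : NNReal in nhdsWithin 0 (Ioi 0), 3 * (c : ℝ) < r :=
    nhdsWithin_le_nhds <| (by fun_prop : Continuous fun c : NNReal => 3 * (c : ℝ)).tendsto' 0 0
      (by simp) |>.eventually_lt_const hr
  have hinv : ∀ᶠ c : NNReal in nhdsWithin 0 (Ioi 0),
      Subsingleton E ∨ c < ‖(e.symm : E →L[ℝ] E)‖₊⁻¹ := by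
    rcases e.subsingleton_or_nnnorm_symm_pos with h | h
    · exact .of_forall fun _ => .inl h
    · exact nhdsWithin_le_nhds ((eventually_lt_nhds (inv_pos.2 h)).mono fun _ => .inr)
  have hlow : ∀ᶠ c : NNReal in nhdsWithin 0 (Ioi 0), ∀ i, a i = 1 → 3 * c ≤ b i := by
    refine Filter.eventually_all.2 fun i => Filter.eventually_imp_distrib_left.2 ?_
    exact fun hi => (hsmall (ha i hi)).mono fun _ => le_of_lt
  have hhigh : ∀ᶠ c : NNReal in nhdsWithin 0 (Ioi 0), ∀ i, a i ≠ 1 → a i + 3 * c < 1 := by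
    refine Filter.eventually_all.2 fun i => Filter.eventually_imp_distrib_left.2 ?_
    exact fun hi => (hsmall (sub_pos.2 ((ha' i).lt_of_ne hi))).mono fun _ h => by linarith
  have heighth : ∀ᶠ c : NNReal in nhdsWithin 0 (Ioi 0), (c : ℝ) ≤ 1 / 8 :=
    (hsmall (r := 3 / 8) (by norm_num)).mono fun _ h => by linarith
  have hpos : ∀ᶠ c : NNReal in nhdsWithin 0 (Ioi 0), 0 < c := self_mem_nhdsWithin
  obtain ⟨c, hc⟩ := (hpos.and (heighth.and (hinv.and (hlow.and hhigh)))).exists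
  exact ⟨c, hc⟩

/-- The permutation `σ` of polyradii followed by the scaling of the gap to the torus by `c`. -/
def gapScale {n : ℕ} (c : ℝ) (σ : Equiv.Perm (Fin n)) (r : Fin n → ℝ) : Fin n → ℝ :=
  1 - c • (1 - r ∘ σ)

theorem exists_nhds_lintegral_sq_comp_le (hhol : DifferentiableOn ℂ Φ (polydisc n))
    (hsm : ContDiffOn ℝ 1 Φ (closedPolydisc n)) (hmap : MapsTo Φ (polydisc n) (polydisc n))
    (hrank : rankCond n Φ) (θ₀ : Fin n → ℝ) :
    ∃ ρ ∈ Ioc (0 : ℝ) 1, ∃ c ∈ Ioc (0 : ℝ) 1, ∃ A ≠ ∞, ∃ (σ : Equiv.Perm (Fin n))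
      (ω : Fin n → ℂ), (∀ i, ‖ω i‖ = 1) ∧ ∀ f, DifferentiableOn ℂ f (polydisc n) →
      ∀ r : Fin n → ℝ, (∀ j, 1 - r j ∈ Ioo 0 ρ) →
        ∫⁻ θ in ball θ₀ ρ, ‖f (Φ (torusMap 0 r θ))‖ₑ ^ 2 ≤
          A * hardyMean (fun z => f (ω * z)) (gapScale c σ r) := by
  have hre (j : Fin n) : (logPoint 0 θ₀ j).re = 0 := by simp [logPoint]
  have hl₀ : logPoint 0 θ₀ ∈ leftHalfSpace n := fun j => (hre j).le
  obtain ⟨B, hBunit, hB⟩ := exists_isUnit_logJacobian_eq hhol hsm hmap hrank hre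
  obtain ⟨σ, hσ⟩ := exists_perm_apply_ne_zero ((Matrix.isUnit_iff_isUnit_det B).1 hBunit).ne_zero
  let E : (Fin n → ℝ) ≃L[ℝ] Fin n → ℝ :=
    (Matrix.toLinearEquiv' B hBunit.invertible).toContinuousLinearEquiv
  obtain ⟨c, hc0, hc8, hcE, hcB, hcΦ⟩ := exists_patchConst
    (fun i hi => (hB i hi (σ i)).1.lt_of_ne' (hσ i))
    (fun i => mapsTo_closedPolydisc hsm.continuousOn hmap (mapsTo_coordExp hl₀) i) E
  obtain ⟨S, hS, hpatch⟩ := exists_isLogPatch hhol hsm hl₀ (fun i hi j => (hB i hi j).2) hc0 hcΦ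
  obtain ⟨ρ, hρ, hmem⟩ := exists_nhds_forall_logPoint_mem hS
  refine ⟨ρ, hρ, c, ⟨hc0, hc8.trans (by norm_num)⟩,
    stolzConst c (‖(E.symm : (Fin n → ℝ) →L[ℝ] Fin n → ℝ)‖₊⁻¹ - c)⁻¹ ^ n,
    ENNReal.pow_ne_top (stolzConst_ne_top _ _), σ, boundaryValue Φ (logPoint 0 θ₀),
    norm_boundaryValue, fun f hf r hr => ?_⟩
  have h := hpatch.lintegral_sq_comp_le hsm hmap hc0 hc8 hcB (E := E) (t := 1 - r)
    (fun v => rfl) hcE (fun j => ⟨(hr j).1, (hr j).2.trans_le hρ.2⟩) measurableSet_ball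
    (fun θ hθ => hmem θ hθ (1 - r) fun j => ⟨(hr j).1.le, (hr j).2⟩)
    (fun θ hθ k => hmem θ hθ _ fun j => ?_) hf
  · rwa [_root_.sub_sub_cancel] at h
  · rcases eq_or_ne j k with rfl | hj
    · simp [hρ.1]
    · rw [Function.update_of_ne hj]
      exact ⟨(hr j).1.le, (hr j).2⟩

end LocalEstimate

section RadialMeasure

variable {n : ℕ} {w : (Fin n → ℝ) → ℝ≥0∞} {f : (Fin n → ℂ) → ℂ}

/-- The polyradii of the tori that foliate the polydisc. -/
def radiusBox (n : ℕ) : Set (Fin n → ℝ) := univ.pi fun _ => Ioo 0 1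

lemma measurableSet_radiusBox (n : ℕ) : MeasurableSet (radiusBox n) :=
  .univ_pi fun _ => measurableSet_Ioo

/-- A weight on polyradii that increases towards the torus and treats all coordinates alike. -/
structure IsRadialWeight (w : (Fin n → ℝ) → ℝ≥0∞) : Prop where
  measurable : Measurable w
  monotoneOn : MonotoneOn w (radiusBox n)
  comp_perm : ∀ (σ : Equiv.Perm (Fin n)) r, w (r ∘ σ) = w r

/-- The measure on the polydisc with density `w (|z₁|, …, |zₙ|)`. -/
def radialMeasure (w : (Fin n → ℝ) → ℝ≥0∞) : Measure (Fin n → ℂ) :=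
  (volume.restrict (polydisc n)).withDensity fun z => w fun i => ‖z i‖

/-- The weight `w` multiplied by the Jacobian `r₁ ⋯ rₙ` of polar coordinates. -/
def polarWeight (w : (Fin n → ℝ) → ℝ≥0∞) (r : Fin n → ℝ) : ℝ≥0∞ :=
  (∏ i, ENNReal.ofReal (r i)) * w r

lemma IsRadialWeight.polarWeight (hw : IsRadialWeight w) : IsRadialWeight (polarWeight w) where
  measurable := by
    have := hw.measurable
    unfold _root_.polarWeight
    fun_prop
  monotoneOn _ hr _ hs hrs := mul_le_mul'
    (Finset.prod_le_prod' fun i _ => ENNReal.ofReal_le_ofReal (hrs i)) (hw.monotoneOn hr hs hrs)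
  comp_perm σ r := congr_arg₂ (· * ·)
    (Equiv.prod_comp σ fun i => ENNReal.ofReal (r i)) (hw.comp_perm σ r)

lemma measurable_comp_torusMap {G : (Fin n → ℂ) → ℝ≥0∞} (hG : Measurable G) (r : Fin n → ℝ) :
    Measurable fun θ => G (torusMap 0 r θ) :=
  hG.comp (continuous_torusMap.comp (.prodMk_right r)).measurable

lemma lintegral_eq_lintegral_torusMap {G : (Fin n → ℂ) → ℝ≥0∞} (hG : Measurable G) :
    ∫⁻ z, G z = ∫⁻ r in univ.pi fun _ => Ioi 0,
      (∏ i, ENNReal.ofReal (r i)) * ∫⁻ θ in angleBox n, G (torusMap 0 r θ) := by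
  have hmeas : Measurable fun q : (Fin n → ℝ) × (Fin n → ℝ) => G (torusMap 0 q.1 q.2) :=
    hG.comp continuous_torusMap.measurable
  have hprod : Measurable fun q : (Fin n → ℝ) × (Fin n → ℝ) =>
      (∏ i, ENNReal.ofReal (q.1 i)) * G (torusMap 0 q.1 q.2) := .mul (by fun_prop) hmeas
  have hpolar (p : Fin n → ℝ × ℝ) : (fun i => Complex.polarCoord.symm (p i)) =
      torusMap 0 (fun i => (p i).1) fun i => (p i).2 := by
    ext i
    simp [Complex.polarCoord_symm_apply, torusMap, Complex.exp_mul_I]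
  have htarget : (univ.pi fun _ : Fin n => Complex.polarCoord.target) =
      MeasurableEquiv.arrowProdEquivProdArrow ℝ ℝ (Fin n) ⁻¹'
        ((univ.pi fun _ => Ioi 0) ×ˢ angleBox n) := by
    ext p
    simp only [Complex.polarCoord_target, angleBox, MeasurableEquiv.arrowProdEquivProdArrow,
      mem_preimage, mem_prod, mem_univ_pi]
    exact forall_and
  calc ∫⁻ z, G z
      = ∫⁻ p in univ.pi fun _ : Fin n => Complex.polarCoord.target,
          (∏ i, ENNReal.ofReal (p i).1) *
            G (torusMap 0 (fun i => (p i).1) fun i => (p i).2) := by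
        simp only [← Complex.lintegral_comp_pi_polarCoord_symm, hpolar]
    _ = ∫⁻ q in (univ.pi fun _ => Ioi 0) ×ˢ angleBox n,
          (∏ i, ENNReal.ofReal (q.1 i)) * G (torusMap 0 q.1 q.2) := by
        rw [htarget]
        exact (volume_measurePreserving_arrowProdEquivProdArrow ℝ ℝ
          (Fin n)).setLIntegral_comp_preimage_emb (MeasurableEquiv.measurableEmbedding _)
          (fun q => (∏ i, ENNReal.ofReal (q.1 i)) * G (torusMap 0 q.1 q.2)) _
    _ = _ := by
        rw [Measure.volume_eq_prod, ← Measure.prod_restrict,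
          lintegral_prod _ hprod.aemeasurable]
        simp only [lintegral_const_mul _ (measurable_comp_torusMap hG _)]

theorem lintegral_radialMeasure (hw : Measurable w) {G : (Fin n → ℂ) → ℝ≥0∞} (hG : Measurable G) :
    ∫⁻ z, G z ∂radialMeasure w =
      ∫⁻ r in radiusBox n, polarWeight w r * ∫⁻ θ in angleBox n, G (torusMap 0 r θ) := by
  have hpolydisc := (isOpen_polydisc n).measurableSet
  have hpos : MeasurableSet (univ.pi fun _ : Fin n => Ioi (0 : ℝ)) :=
    .univ_pi fun _ => measurableSet_Ioi
  have hinter : radiusBox n ∩ univ.pi (fun _ => Ioi 0) = radiusBox n :=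
    inter_eq_left.2 fun r hr i hi => (hr i hi).1
  rw [radialMeasure, lintegral_withDensity_eq_lintegral_mul _ (by fun_prop) hG,
    ← lintegral_indicator hpolydisc,
    lintegral_eq_lintegral_torusMap ((Measurable.mul (by fun_prop) hG).indicator hpolydisc),
    ← hinter, ← setLIntegral_indicator (measurableSet_radiusBox n)]
  refine setLIntegral_congr_fun hpos fun r hr => ?_
  have hr0 : ∀ i, 0 ≤ r i := fun i => (hr i trivial).le
  by_cases hr1 : ∀ i, r i < 1
  · have hmem (θ : Fin n → ℝ) : torusMap 0 r θ ∈ polydisc n :=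
      (torusMap_mem_polydisc_iff hr0).2 hr1
    simp only [indicator_of_mem (hmem _), Pi.mul_apply, norm_torusMap hr0,
      lintegral_const_mul _ (measurable_comp_torusMap hG r), polarWeight, mul_assoc]
    rw [indicator_of_mem fun i _ => ⟨hr i trivial, hr1 i⟩]
  · have hnotMem (θ : Fin n → ℝ) : torusMap 0 r θ ∉ polydisc n := by
      rwa [torusMap_mem_polydisc_iff hr0]
    rw [indicator_of_notMem fun h => hr1 fun i => (h i trivial).2]
    simp [indicator_of_notMem (hnotMem _)]

lemma exists_measurable_eqOn (hf : ContinuousOn f (polydisc n)) :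
    ∃ g, Measurable g ∧ EqOn f g (polydisc n) := by
  classical
  exact ⟨(polydisc n).piecewise f 0,
    hf.measurable_piecewise continuousOn_const (isOpen_polydisc n).measurableSet,
    (piecewise_eqOn _ _ _).symm⟩

lemma hardyMean_congr {g : (Fin n → ℂ) → ℂ} (hfg : EqOn f g (polydisc n)) {r : Fin n → ℝ}
    (hr : r ∈ radiusBox n) : hardyMean f r = hardyMean g r := by
  refine lintegral_congr fun θ => ?_
  rw [hfg ((torusMap_mem_polydisc_iff fun i => (hr i trivial).1.le).2 fun i => (hr i trivial).2)]

lemma aemeasurable_hardyMean_comp (hf : ContinuousOn f (polydisc n)) {φ : (Fin n → ℝ) → Fin n → ℝ}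
    (hφ : Measurable φ) (hmaps : MapsTo φ (radiusBox n) (radiusBox n)) :
    AEMeasurable (fun r => hardyMean f (φ r)) (volume.restrict (radiusBox n)) := by
  obtain ⟨g, hg, hfg⟩ := exists_measurable_eqOn hf
  have hmeas : Measurable (hardyMean g) :=
    ((hg.comp continuous_torusMap.measurable).enorm.pow_const 2).lintegral_prod_right'
  refine ⟨fun r => hardyMean g (φ r), hmeas.comp hφ, ?_⟩
  filter_upwards [ae_restrict_mem (measurableSet_radiusBox n)] with r hr
  exact hardyMean_congr hfg (hmaps hr)

lemma radialMeasure_ae_mem_polydisc (w : (Fin n → ℝ) → ℝ≥0∞) :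
    ∀ᵐ z ∂radialMeasure w, z ∈ polydisc n :=
  (withDensity_absolutelyContinuous _ _).ae_le (ae_restrict_mem (isOpen_polydisc n).measurableSet)

theorem lintegral_sq_radialMeasure (hw : Measurable w) (hf : ContinuousOn f (polydisc n)) :
    ∫⁻ z, ‖f z‖ₑ ^ 2 ∂radialMeasure w = ∫⁻ r in radiusBox n, polarWeight w r * hardyMean f r := by
  obtain ⟨g, hg, hfg⟩ := exists_measurable_eqOn hf
  calc ∫⁻ z, ‖f z‖ₑ ^ 2 ∂radialMeasure w
      = ∫⁻ z, ‖g z‖ₑ ^ 2 ∂radialMeasure w := by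
        refine lintegral_congr_ae ?_
        filter_upwards [radialMeasure_ae_mem_polydisc w] with z hz
        rw [hfg hz]
    _ = ∫⁻ r in radiusBox n, polarWeight w r * hardyMean g r :=
        lintegral_radialMeasure hw (hg.enorm.pow_const 2)
    _ = ∫⁻ r in radiusBox n, polarWeight w r * hardyMean f r :=
        setLIntegral_congr_fun (measurableSet_radiusBox n) fun r hr => by
          rw [hardyMean_congr hfg hr]

lemma measurableEmbedding_mul {ω : Fin n → ℂ} (hω : ∀ i, ‖ω i‖ = 1) :
    MeasurableEmbedding (ω * ·) :=
  (continuous_const_mul ω).measurableEmbedding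
    (Pi.isUnit_iff.2 fun i => (norm_pos_iff.1 (hω i ▸ one_pos)).isUnit).mul_right_injective

lemma measurePreserving_mul_radialMeasure {ω : Fin n → ℂ} (hω : ∀ i, ‖ω i‖ = 1)
    (w : (Fin n → ℝ) → ℝ≥0∞) :
    MeasurePreserving (ω * ·) (radialMeasure w) (radialMeasure w) := by
  have hemb := measurableEmbedding_mul hω
  have hvol : MeasurePreserving (ω * · : (Fin n → ℂ) → Fin n → ℂ) :=
    volume_preserving_pi fun i =>
      (rotation ⟨ω i, mem_sphere_zero_iff_norm.2 (hω i)⟩).measurePreserving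
  have hres : MeasurePreserving (ω * ·) (volume.restrict (polydisc n))
      (volume.restrict (polydisc n)) := by
    have hpre : (ω * ·) ⁻¹' polydisc n = polydisc n := ext fun z => mul_mem_polydisc_iff hω
    simpa only [hpre] using hvol.restrict_preimage_emb hemb (polydisc n)
  refine ⟨hemb.measurable, Measure.ext fun s hs => ?_⟩
  rw [Measure.map_apply hemb.measurable hs, radialMeasure,
    withDensity_apply _ (hemb.measurable hs), withDensity_apply _ hs,
    ← hres.setLIntegral_comp_preimage_emb hemb _ s]
  simp [hω]

end RadialMeasure

section RadialChange

variable {n : ℕ} {w : (Fin n → ℝ) → ℝ≥0∞} {c : ℝ} {r : Fin n → ℝ}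

lemma gapScale_gapScale (c ε : ℝ) (σ : Equiv.Perm (Fin n)) (r : Fin n → ℝ) :
    gapScale c σ (gapScale ε 1 r) = gapScale (c * ε) σ r := by
  ext i
  simp [gapScale, mul_assoc]

lemma measurable_gapScale (c : ℝ) (σ : Equiv.Perm (Fin n)) : Measurable (gapScale c σ) := by
  unfold gapScale Function.comp
  fun_prop

lemma comp_perm_le_gapScale (hc : c ≤ 1) (σ : Equiv.Perm (Fin n)) (hr : r ∈ radiusBox n) :
    r ∘ σ ≤ gapScale c σ r := fun i => by
  have := (hr (σ i) trivial).2
  simp only [gapScale, Function.comp_apply, Pi.sub_apply, Pi.one_apply, Pi.smul_apply, smul_eq_mul]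
  nlinarith

lemma comp_perm_mem_radiusBox (σ : Equiv.Perm (Fin n)) (hr : r ∈ radiusBox n) :
    r ∘ σ ∈ radiusBox n := fun i _ => hr (σ i) trivial

lemma gapScale_mem_radiusBox (hc : c ∈ Ioc 0 1) (σ : Equiv.Perm (Fin n)) (hr : r ∈ radiusBox n) :
    gapScale c σ r ∈ radiusBox n := fun i _ =>
  ⟨(hr (σ i) trivial).1.trans_le (comp_perm_le_gapScale hc.2 σ hr i),
    sub_lt_self _ (mul_pos hc.1 (sub_pos.2 (hr (σ i) trivial).2))⟩

lemma measurePreserving_comp_perm (σ : Equiv.Perm (Fin n)) :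
    MeasurePreserving fun r : Fin n → ℝ => r ∘ σ := by
  have heq : (fun r : Fin n → ℝ => r ∘ σ) = MeasurableEquiv.piCongrLeft (fun _ => ℝ) σ.symm := by
    funext r i
    obtain ⟨j, rfl⟩ := σ.symm.surjective i
    simp only [MeasurableEquiv.coe_piCongrLeft, Equiv.piCongrLeft_apply_apply,
      Function.comp_apply, Equiv.apply_symm_apply]
  exact heq ▸ volume_measurePreserving_piCongrLeft (fun _ => ℝ) σ.symm

lemma lintegral_comp_gapScale (hc : 0 < c) (σ : Equiv.Perm (Fin n)) (H : (Fin n → ℝ) → ℝ≥0∞) :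
    ∫⁻ r, H (gapScale c σ r) = ENNReal.ofReal (c⁻¹ ^ n) * ∫⁻ r, H r := by
  have hemb : MeasurableEmbedding fun r : Fin n → ℝ => r ∘ σ :=
    (Pi.continuous_precomp σ).measurableEmbedding σ.surjective.injective_comp_right
  calc ∫⁻ r, H (gapScale c σ r)
      = ∫⁻ r : Fin n → ℝ, H (1 - c • (1 - r)) :=
        (measurePreserving_comp_perm σ).lintegral_comp_emb hemb fun r => H (1 - c • (1 - r))
    _ = ∫⁻ r : Fin n → ℝ, H (1 - c • r) :=
        lintegral_sub_left_eq_self (fun r => H (1 - c • r)) 1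
    _ = ∫⁻ r, H (1 - r) ∂Measure.map (c • ·) volume :=
        (lintegral_map_equiv (fun r => H (1 - r)) (MeasurableEquiv.smul₀ c hc.ne')).symm
    _ = ENNReal.ofReal (c⁻¹ ^ n) * ∫⁻ r, H (1 - r) := by
        rw [Measure.map_addHaar_smul _ hc.ne', lintegral_smul_measure, Module.finrank_fin_fun,
          abs_of_pos (by positivity), inv_pow, smul_eq_mul]
    _ = ENNReal.ofReal (c⁻¹ ^ n) * ∫⁻ r, H r := by rw [lintegral_sub_left_eq_self H 1]

lemma lintegral_mul_comp_gapScale_le (hw : IsRadialWeight w) (hc : c ∈ Ioc 0 1)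
    (σ : Equiv.Perm (Fin n)) (H : (Fin n → ℝ) → ℝ≥0∞) :
    ∫⁻ r in radiusBox n, w r * H (gapScale c σ r) ≤
      ENNReal.ofReal (c⁻¹ ^ n) * ∫⁻ r in radiusBox n, w r * H r := by
  rw [← lintegral_indicator (measurableSet_radiusBox n) fun r => w r * H r,
    ← lintegral_comp_gapScale hc.1 σ, ← lintegral_indicator (measurableSet_radiusBox n)]
  refine lintegral_mono (indicator_le fun r hr => ?_)
  have hr' := gapScale_mem_radiusBox hc σ hr
  rw [indicator_of_mem hr', ← hw.comp_perm σ r]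
  gcongr
  exact hw.monotoneOn (comp_perm_mem_radiusBox σ hr) hr' (comp_perm_le_gapScale hc.2 σ hr)

end RadialChange

section Global

variable {n : ℕ} {Φ : (Fin n → ℂ) → Fin n → ℂ}

lemma exists_hardyMean_le_gapScale (n : ℕ) : ∃ A ≠ ∞, ∀ f : (Fin n → ℂ) → ℂ,
    DifferentiableOn ℂ f (polydisc n) → ∀ ε ∈ Ioc (0 : ℝ) (1 / 2), ∀ r ∈ radiusBox n,
      hardyMean f r ≤ A * hardyMean f (gapScale ε 1 r) := by
  refine ⟨stolzConst (1 / 4) 1 ^ n, ENNReal.pow_ne_top (stolzConst_ne_top _ _),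
    fun f hf ε hε r hr => ?_⟩
  have hr' := gapScale_mem_radiusBox ⟨hε.1, hε.2.trans (by norm_num)⟩ 1 hr
  refine lintegral_sq_le_hardyMean hf (fun i => (hr' i trivial).1) (fun i => (hr' i trivial).2)
    (by norm_num) (by norm_num) (.univ_pi fun _ => measurableSet_Ioo) continuousOn_id
    (AntilipschitzWith.subtype_coe _) (mapsTo_id _) fun θ _ i => ?_
  have hri := hr i trivial
  have hgap : gapScale ε 1 r i = 1 - ε * (1 - r i) := rfl
  have := circleMap_mem_stolzRegion (R := r i) (s := gapScale ε 1 r i) (c := 1 / 4) (x := θ i)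
    hri.1.le (by nlinarith [hε.1, hε.2, hri.2]) (by nlinarith [hε.1, hε.2, hri.1, hri.2]) le_rfl
  simpa [torusMap, circleMap] using this

lemma lintegral_biUnion_finset_le {α ι : Type*} [MeasurableSpace α] {μ : Measure α} (T : Finset ι)
    (U : ι → Set α) (g : α → ℝ≥0∞) :
    ∫⁻ x in ⋃ p ∈ T, U p, g x ∂μ ≤ ∑ p ∈ T, ∫⁻ x in U p, g x ∂μ := by
  simp only [← Finset.mem_coe]
  rw [biUnion_eq_iUnion, ← Finset.sum_coe_sort, ← tsum_fintype (L := .unconditional _)]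
  exact lintegral_iUnion_le (fun p : T => U p) g

lemma angleBox_subset_closedBall (n : ℕ) : angleBox n ⊆ closedBall 0 Real.pi := fun θ hθ => by
  rw [closedBall_pi _ Real.pi_pos.le]
  refine fun i hi => ?_
  simpa [Real.norm_eq_abs, abs_le] using Ioo_subset_Icc_self (hθ i hi)

theorem exists_finset_hardyMean_comp_le (hhol : DifferentiableOn ℂ Φ (polydisc n))
    (hsm : ContDiffOn ℝ 1 Φ (closedPolydisc n)) (hmap : MapsTo Φ (polydisc n) (polydisc n))
    (hrank : rankCond n Φ) :
    ∃ (T : Finset (Fin n → ℝ)) (A : (Fin n → ℝ) → ℝ≥0∞) (c : (Fin n → ℝ) → ℝ)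
      (σ : (Fin n → ℝ) → Equiv.Perm (Fin n)) (ω : (Fin n → ℝ) → Fin n → ℂ),
      (∀ p, A p ≠ ∞) ∧ (∀ p, c p ∈ Ioc 0 1) ∧ (∀ p i, ‖ω p i‖ = 1) ∧
      ∀ f, DifferentiableOn ℂ f (polydisc n) → ∀ r ∈ radiusBox n,
        hardyMean (fun z => f (Φ z)) r ≤
          ∑ p ∈ T, A p * hardyMean (fun z => f (ω p * z)) (gapScale (c p) (σ p) r) := by
  choose ρ hρ c hc A hA σ ω hω hlocal using
    exists_nhds_lintegral_sq_comp_le hhol hsm hmap hrank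
  obtain ⟨A₀, hA₀, hgrow⟩ := exists_hardyMean_le_gapScale n
  obtain ⟨T, -, hT⟩ := (isCompact_closedBall (0 : Fin n → ℝ) Real.pi).elim_nhds_subcover
    (fun p => ball p (ρ p)) fun p _ => ball_mem_nhds p (hρ p).1
  obtain ⟨ε, hε, hερ⟩ : ∃ ε ∈ Ioc (0 : ℝ) (1 / 2), ∀ p ∈ T, ε ∈ Ioc 0 (ρ p) :=
    (Filter.Eventually.and (Ioc_mem_nhdsGT one_half_pos) <|
      (Filter.eventually_all_finset T).2 fun p _ => Ioc_mem_nhdsGT (hρ p).1).exists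
  have hε' : ε ∈ Ioc 0 1 := ⟨hε.1, hε.2.trans one_half_lt_one.le⟩
  refine ⟨T, fun p => A₀ * A p, fun p => c p * ε, σ, ω, fun p => ENNReal.mul_ne_top hA₀ (hA p),
    fun p => ⟨mul_pos (hc p).1 hε.1, mul_le_one₀ (hc p).2 hε.1.le hε'.2⟩, hω,
    fun f hf r hr => ?_⟩
  have hr' := gapScale_mem_radiusBox hε' 1 hr
  calc hardyMean (fun z => f (Φ z)) r
      ≤ A₀ * hardyMean (fun z => f (Φ z)) (gapScale ε 1 r) :=
        hgrow _ (hf.comp hhol hmap) ε hε r hr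
    _ ≤ A₀ * ∫⁻ θ in ⋃ p ∈ T, ball p (ρ p), ‖f (Φ (torusMap 0 (gapScale ε 1 r) θ))‖ₑ ^ 2 := by
        gcongr
        exact lintegral_mono_set ((angleBox_subset_closedBall n).trans hT)
    _ ≤ A₀ * ∑ p ∈ T, A p * hardyMean (fun z => f (ω p * z)) (gapScale (c p * ε) (σ p) r) := by
        gcongr
        refine (lintegral_biUnion_finset_le _ _ _).trans (Finset.sum_le_sum fun p hp => ?_)
        rw [← gapScale_gapScale]
        refine hlocal p f hf _ fun j => ⟨sub_pos.2 (hr' j trivial).2, ?_⟩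
        refine lt_of_lt_of_le ?_ (hερ p hp).2
        simpa [gapScale] using mul_lt_of_lt_one_right hε.1 (sub_lt_self 1 (hr j trivial).1)
    _ = ∑ p ∈ T, A₀ * A p * hardyMean (fun z => f (ω p * z)) (gapScale (c p * ε) (σ p) r) := by
        simp only [Finset.mul_sum, mul_assoc]

lemma lintegral_polarWeight_mul_hardyMean_le {w : (Fin n → ℝ) → ℝ≥0∞} (hw : IsRadialWeight w)
    {c : ℝ} (hc : c ∈ Ioc 0 1) (σ : Equiv.Perm (Fin n)) {ω : Fin n → ℂ} (hω : ∀ i, ‖ω i‖ = 1)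
    {f : (Fin n → ℂ) → ℂ} (hf : DifferentiableOn ℂ f (polydisc n)) :
    ∫⁻ r in radiusBox n, polarWeight w r * hardyMean (fun z => f (ω * z)) (gapScale c σ r) ≤
      ENNReal.ofReal (c⁻¹ ^ n) * ∫⁻ z, ‖f z‖ₑ ^ 2 ∂radialMeasure w := by
  rw [← (measurePreserving_mul_radialMeasure hω w).lintegral_comp_emb (measurableEmbedding_mul hω),
    lintegral_sq_radialMeasure hw.measurable (differentiableOn_comp_mul hω hf).continuousOn]
  exact lintegral_mul_comp_gapScale_le hw.polarWeight hc σ _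

theorem rank_sufficiency_uniform_in_beta_general (hhol : DifferentiableOn ℂ Φ (polydisc n))
    (hsm : ContDiffOn ℝ 1 Φ (closedPolydisc n)) (hmap : MapsTo Φ (polydisc n) (polydisc n))
    (hrank : rankCond n Φ) :
    ∃ C > (0 : ℝ), ∀ w, IsRadialWeight w → ∀ f : (Fin n → ℂ) → ℂ,
      DifferentiableOn ℂ f (polydisc n) →
      ∫⁻ z, ‖f (Φ z)‖ₑ ^ 2 ∂radialMeasure w ≤
        ENNReal.ofReal C * ∫⁻ z, ‖f z‖ₑ ^ 2 ∂radialMeasure w := by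
  obtain ⟨T, A, c, σ, ω, hA, hc, hω, hmean⟩ := exists_finset_hardyMean_comp_le hhol hsm hmap hrank
  set D := ∑ p ∈ T, A p * ENNReal.ofReal ((c p)⁻¹ ^ n)
  have hD : D ≠ ∞ :=
    ENNReal.sum_ne_top.2 fun p _ => ENNReal.mul_ne_top (hA p) ENNReal.ofReal_ne_top
  have hDC : D ≤ ENNReal.ofReal (D.toReal + 1) :=
    (ENNReal.le_ofReal_iff_toReal_le hD (by positivity)).2 (by linarith)
  refine ⟨D.toReal + 1, by positivity, fun w hw f hf => ?_⟩
  set M : (Fin n → ℝ) → (Fin n → ℝ) → ℝ≥0∞ := fun p r =>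
    polarWeight w r * hardyMean (fun z => f (ω p * z)) (gapScale (c p) (σ p) r)
  have hM (p) : AEMeasurable (M p) (volume.restrict (radiusBox n)) :=
    hw.polarWeight.measurable.aemeasurable.mul <|
      aemeasurable_hardyMean_comp (differentiableOn_comp_mul (hω p) hf).continuousOn
        (measurable_gapScale _ _) fun r => gapScale_mem_radiusBox (hc p) (σ p)
  calc ∫⁻ z, ‖f (Φ z)‖ₑ ^ 2 ∂radialMeasure w
      = ∫⁻ r in radiusBox n, polarWeight w r * hardyMean (fun z => f (Φ z)) r :=
        lintegral_sq_radialMeasure hw.measurable (hf.comp hhol hmap).continuousOn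
    _ ≤ ∫⁻ r in radiusBox n, ∑ p ∈ T, A p * M p r := by
        refine setLIntegral_mono' (measurableSet_radiusBox n) fun r hr => ?_
        simp only [M, mul_left_comm (A _), ← Finset.mul_sum]
        gcongr
        exact hmean f hf r hr
    _ = ∑ p ∈ T, A p * ∫⁻ r in radiusBox n, M p r := by
        rw [lintegral_finsetSum' _ fun p _ => (hM p).const_mul _]
        exact Finset.sum_congr rfl fun p _ => lintegral_const_mul'' _ (hM p)
    _ ≤ D * ∫⁻ z, ‖f z‖ₑ ^ 2 ∂radialMeasure w := by
        simp only [D, Finset.sum_mul, mul_assoc]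
        gcongr with p
        exact lintegral_polarWeight_mul_hardyMean_le hw (hc p) (σ p) (hω p) hf
    _ ≤ ENNReal.ofReal (D.toReal + 1) * ∫⁻ z, ‖f z‖ₑ ^ 2 ∂radialMeasure w := by gcongr

end Global

/-- The density of `V_β` as a function of the polyradius. -/
def betaWeight (n : ℕ) (β : ℝ) (r : Fin n → ℝ) : ℝ≥0∞ :=
  ENNReal.ofReal (∏ j, ((β + 1) * (1 - r j ^ 2) ^ β / Real.pi))

lemma isRadialWeight_betaWeight (n : ℕ) {β : ℝ} (hβ : β ∈ Ioc (-1 : ℝ) 0) :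
    IsRadialWeight (betaWeight n β) where
  measurable := by
    unfold betaWeight
    fun_prop
  monotoneOn r hr s hs hrs := by
    have hβ1 : 0 ≤ β + 1 := by linarith [hβ.1]
    have hr0 (i) : 0 ≤ r i := (hr i trivial).1.le
    have hr1 (i) : 0 ≤ 1 - r i ^ 2 := by nlinarith [hr0 i, (hr i trivial).2]
    have hs1 (i) : 0 < 1 - s i ^ 2 := by nlinarith [(hs i trivial).1, (hs i trivial).2]
    refine ENNReal.ofReal_le_ofReal (Finset.prod_le_prod (fun i _ => ?_) fun i _ => ?_)
    · have := hr1 i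
      positivity
    · gcongr (β + 1) * ?_ / Real.pi
      exact Real.rpow_le_rpow_of_nonpos (hs1 i) (by gcongr; exacts [hr0 i, hrs i]) hβ.2
  comp_perm σ r := congr_arg ENNReal.ofReal <|
    Equiv.prod_comp σ fun j => (β + 1) * (1 - r j ^ 2) ^ β / Real.pi

theorem rank_sufficiency_uniform_in_beta (n : ℕ) (Φ : (Fin n → ℂ) → (Fin n → ℂ))
    (hhol : DifferentiableOn ℂ Φ (polydisc n))
    (hsm : ContDiffOn ℝ 1 Φ (closedPolydisc n))
    (hmap : ∀ z ∈ polydisc n, Φ z ∈ polydisc n)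
    (hrank : rankCond n Φ) :
    ∃ C > (0:ℝ), ∀ β ∈ Set.Ioo (-1:ℝ) 0, ∀ f : (Fin n → ℂ) → ℂ,
      DifferentiableOn ℂ f (polydisc n) →
        ∫⁻ z, ENNReal.ofReal (‖f (Φ z)‖ ^ 2) ∂(Vbeta n β) ≤
          ENNReal.ofReal C * ∫⁻ z, ENNReal.ofReal (‖f z‖ ^ 2) ∂(Vbeta n β) := by
  obtain ⟨C, hC, h⟩ := rank_sufficiency_uniform_in_beta_general hhol hsm hmap hrank
  refine ⟨C, hC, fun β hβ f hf => ?_⟩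
  have hV : Vbeta n β = radialMeasure (betaWeight n β) := rfl
  simpa only [hV, ENNReal.ofReal_pow (norm_nonneg _), ofReal_norm] using
    h (betaWeight n β) (isRadialWeight_betaWeight n ⟨hβ.1, hβ.2.le⟩) f hf

end
end

section
/- Suppose φ : 𝔻² → 𝔻 is holomorphic and C¹-smooth on the closed bidisc, and there exist z_0 ∈ 𝔻 and ζ ∈ 𝕋 such that |φ(z_0, ζ)| = 1. Then ∂φ/∂z(z, ζ) = 0 for all z ∈ 𝔻, and the function z ↦ ∂φ/∂w(z, ζ) is constant on 𝔻 (here z denotes the first variable and w the second). -/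
open MeasureTheory Metric Set ENNReal

noncomputable section

/-!
By continuity the derivative of `φ` stays complex linear on the boundary face `𝔻 × 𝕋`. The slice
`z ↦ φ(z, ζ)` is then holomorphic, and it attains its maximum modulus inside `𝔻`, so it is equal to
a constant `c`. On the circle `|w| = 1`, `|φ(z, w)|` is maximal at `ζ` for every `z`, which makes
`conj c · ζ · ∂φ/∂w(z, ζ)` real. It is also holomorphic in `z`, as a locally uniform limit of
difference quotients in `w`, hence constant by the open mapping theorem.
-/

open Filter Topology ComplexConjugate

section RestrictScalars

variable {𝕜 𝕜' E F : Type*} [NontriviallyNormedField 𝕜] [NontriviallyNormedField 𝕜']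
  [NormedAlgebra 𝕜 𝕜'] [NormedAddCommGroup E] [NormedSpace 𝕜 E] [NormedSpace 𝕜' E]
  [IsScalarTower 𝕜 𝕜' E] [NormedAddCommGroup F] [NormedSpace 𝕜 F] [NormedSpace 𝕜' F]
  [IsScalarTower 𝕜 𝕜' F] {f : E → F} {U K : Set E}

theorem fderivWithin_smul_of_subset_closure (hU : IsOpen U) (hUK : U ⊆ K) (hKU : K ⊆ closure U)
    (hK : UniqueDiffOn 𝕜 K) (hf : ContDiffOn 𝕜 1 f K) (hfU : DifferentiableOn 𝕜' f U)
    (a : 𝕜') (v : E) {p : E} (hp : p ∈ K) :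
    fderivWithin 𝕜 f K p (a • v) = a • fderivWithin 𝕜 f K p v := by
  have hcont (u : E) : ContinuousOn (fun q ↦ fderivWithin 𝕜 f K q u) K :=
    (hf.continuousOn_fderivWithin hK le_rfl).clm_apply continuousOn_const
  have hEq : EqOn (fun q ↦ fderivWithin 𝕜 f K q (a • v))
      (fun q ↦ a • fderivWithin 𝕜 f K q v) U := by
    intro q hq
    have hqU : U ∈ 𝓝 q := hU.mem_nhds hq
    have hfq : DifferentiableAt 𝕜' f q := (hfU q hq).differentiableAt hqU
    simp only [fderivWithin_of_mem_nhds (mem_of_superset hqU hUK), hfq.fderiv_restrictScalars 𝕜,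
      ContinuousLinearMap.coe_restrictScalars', map_smul]
  exact hEq.of_subset_closure (hcont _) ((hcont v).const_smul a) hUK hKU hp

theorem contDiffOn_one_extendScalars_of_subset_closure (hU : IsOpen U) (hUK : U ⊆ K)
    (hKU : K ⊆ closure U) (hK : UniqueDiffOn 𝕜 K) (hf : ContDiffOn 𝕜 1 f K)
    (hfU : DifferentiableOn 𝕜' f U) : ContDiffOn 𝕜' 1 f K := by
  have hdiff : DifferentiableOn 𝕜' f K := fun p hp ↦
    (differentiableWithinAt_iff_restrictScalars 𝕜 (hf.differentiableOn one_ne_zero p hp)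
      (hK p hp)).2 ⟨{ fderivWithin 𝕜 f K p with
        map_smul' := fun a v ↦
          fderivWithin_smul_of_subset_closure hU hUK hKU hK hf hfU a v hp }, rfl⟩
  have hcont : ContinuousOn (fderivWithin 𝕜' f K) K := by
    rw [(ContinuousLinearMap.restrictScalarsIsometry 𝕜' E F 𝕜 𝕜).isometry.isEmbedding
      |>.continuousOn_iff]
    exact (hf.continuousOn_fderivWithin hK le_rfl).congr fun p hp ↦
      (hdiff p hp).restrictScalars_fderivWithin 𝕜 (hK p hp)
  rw [← zero_add 1, contDiffOn_succ_iff_fderivWithin hK.mono_field]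
  exact ⟨hdiff, by simp, contDiffOn_zero.2 hcont⟩

end RestrictScalars

section Slices

variable {𝕜 E F G : Type*} [NontriviallyNormedField 𝕜] [NormedAddCommGroup E] [NormedSpace 𝕜 E]
  [NormedAddCommGroup F] [NormedSpace 𝕜 F] [NormedAddCommGroup G] [NormedSpace 𝕜 G]

theorem hasDerivWithinAt_comp_prodMk_right {f : E × 𝕜 → F} {f' : E × 𝕜 →L[𝕜] F} {s : Set E}
    {t : Set 𝕜} {x : E} {y : 𝕜} (hf : HasFDerivWithinAt f f' (s ×ˢ t) (x, y)) (hx : x ∈ s) :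
    HasDerivWithinAt (fun y ↦ f (x, y)) (f' (0, 1)) t y :=
  hf.comp_hasDerivWithinAt y ((hasDerivWithinAt_const y t x).prodMk (hasDerivWithinAt_id y t))
    fun _ hy ↦ mk_mem_prod hx hy

theorem fderivWithin_prod_congr_set_left {f : E × G → F} {s s' : Set E} {t : Set G} {x : E} {y : G}
    (h : s =ᶠ[𝓝 x] s') :
    fderivWithin 𝕜 f (s ×ˢ t) (x, y) = fderivWithin 𝕜 f (s' ×ˢ t) (x, y) :=
  fderivWithin_congr_set <| eventuallyEq_set.2 <|
    ((continuous_fst.tendsto (x, y)).eventually (eventuallyEq_set.1 h)).mono fun _ hp ↦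
      and_congr_left' hp

end Slices

theorem uniqueDiffOn_closedBall {𝕜 E : Type*} [NontriviallyNormedField 𝕜]
    [IsRCLikeNormedField 𝕜] [NormedAddCommGroup E] [NormedSpace ℝ E] [NormedSpace 𝕜 E] (x : E)
    {r : ℝ} (hr : 0 < r) : UniqueDiffOn 𝕜 (closedBall x r) :=
  uniqueDiffOn_convex_of_isRCLikeNormedField (convex_closedBall x r)
    ⟨x, ball_subset_interior_closedBall (mem_ball_self hr)⟩

section Slope

theorem norm_slope_sub_le_of_norm_hasDerivWithin_sub_le {𝕜 F : Type*} [RCLike 𝕜]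
    [NormedAddCommGroup F] [NormedSpace 𝕜 F] {f f' : 𝕜 → F} {m : F} {s : Set 𝕜} {C : ℝ} {x y : 𝕜}
    (hs : Convex ℝ s) (hf : ∀ w ∈ s, HasDerivWithinAt f (f' w) s w)
    (bound : ∀ w ∈ s, ‖f' w - m‖ ≤ C) (hx : x ∈ s) (hy : y ∈ s) (hxy : x ≠ y) :
    ‖slope f x y - m‖ ≤ C := by
  have hyx : y - x ≠ 0 := sub_ne_zero.2 hxy.symm
  have hmean : ‖(f y - y • m) - (f x - x • m)‖ ≤ C * ‖y - x‖ :=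
    hs.norm_image_sub_le_of_norm_hasDerivWithin_le (𝕜 := 𝕜) (f := fun w ↦ f w - w • m)
      (fun w hw ↦ (hf w hw).sub <| by simpa using (hasDerivWithinAt_id w s).smul_const m)
      bound hx hy
  have hslope : slope f x y - m = (y - x)⁻¹ • ((f y - y • m) - (f x - x • m)) := by
    rw [slope_def_module, eq_inv_smul_iff₀ hyx, smul_sub, smul_inv_smul₀ hyx]
    module
  rwa [hslope, norm_smul, norm_inv, inv_mul_le_iff₀ (norm_pos_iff.2 hyx), mul_comm]

theorem tendstoLocallyUniformlyOn_slope {Z 𝕜 F : Type*} [TopologicalSpace Z] [RCLike 𝕜]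
    [NormedAddCommGroup F] [NormedSpace 𝕜 F] {f f' : Z × 𝕜 → F} {U : Set Z} {s : Set 𝕜} {w₀ : 𝕜}
    (hs : Convex ℝ s) (hw₀ : w₀ ∈ s)
    (hf : ∀ z ∈ U, ∀ w ∈ s, HasDerivWithinAt (fun w ↦ f (z, w)) (f' (z, w)) s w)
    (hf' : ContinuousOn f' (U ×ˢ s)) :
    TendstoLocallyUniformlyOn (fun w z ↦ slope (fun w ↦ f (z, w)) w₀ w) (fun z ↦ f' (z, w₀))
      (𝓝[s \ {w₀}] w₀) U := by
  rw [Metric.tendstoLocallyUniformlyOn_iff]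
  intro ε hε z₀ hz₀
  have hf'₀ : Tendsto f' (𝓝[U] z₀ ×ˢ 𝓝[s] w₀) (𝓝 (f' (z₀, w₀))) :=
    nhdsWithin_prod_eq z₀ w₀ U s ▸ hf' (z₀, w₀) ⟨hz₀, hw₀⟩
  obtain ⟨V, hV, W, hW, hVW⟩ :=
    mem_prod_iff.1 (hf'₀ (closedBall_mem_nhds _ (half_pos (half_pos hε))))
  obtain ⟨r, hr, hrW⟩ := Metric.mem_nhdsWithin_iff.1 hW
  have hclose {z w} (hz : z ∈ V) (hw : w ∈ ball w₀ r ∩ s) :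
      ‖f' (z, w) - f' (z₀, w₀)‖ ≤ ε / 2 / 2 :=
    mem_closedBall_iff_norm.1 (hVW (mk_mem_prod hz (hrW hw)))
  have hw₀r : w₀ ∈ ball w₀ r ∩ s := ⟨mem_ball_self hr, hw₀⟩
  refine ⟨V ∩ U, inter_mem hV self_mem_nhdsWithin, ?_⟩
  filter_upwards [self_mem_nhdsWithin, mem_nhdsWithin_of_mem_nhds (ball_mem_nhds w₀ hr)]
    with w ⟨hws, hne⟩ hwr z ⟨hzV, hzU⟩
  have hosc (u) (hu : u ∈ ball w₀ r ∩ s) : ‖f' (z, u) - f' (z, w₀)‖ ≤ ε / 2 :=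
    (norm_sub_le_norm_sub_add_norm_sub _ (f' (z₀, w₀)) _).trans <| by
      rw [norm_sub_rev (f' (z₀, w₀))]
      linarith [hclose hzV hu, hclose hzV hw₀r]
  rw [dist_comm, dist_eq_norm]
  exact (norm_slope_sub_le_of_norm_hasDerivWithin_sub_le ((convex_ball w₀ r).inter hs)
    (fun u hu ↦ (hf z hzU u hu.2).mono inter_subset_right) hosc hw₀r ⟨hwr, hws⟩
    (Ne.symm hne)).trans_lt (half_lt_self hε)

theorem differentiableOn_partialDeriv_right {F : Type*} [NormedAddCommGroup F] [NormedSpace ℂ F]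
    [CompleteSpace F] {f f' : ℂ × ℂ → F} {U s : Set ℂ} {w₀ : ℂ} (hU : IsOpen U)
    (hs : Convex ℝ s) (hw₀ : w₀ ∈ s) (hacc : AccPt w₀ (𝓟 s))
    (hhol : ∀ w ∈ s, DifferentiableOn ℂ (fun z ↦ f (z, w)) U)
    (hf : ∀ z ∈ U, ∀ w ∈ s, HasDerivWithinAt (fun w ↦ f (z, w)) (f' (z, w)) s w)
    (hf' : ContinuousOn f' (U ×ˢ s)) :
    DifferentiableOn ℂ (fun z ↦ f' (z, w₀)) U := by
  have : (𝓝[s \ {w₀}] w₀).NeBot := accPt_principal_iff_nhdsWithin.1 hacc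
  refine (tendstoLocallyUniformlyOn_slope hs hw₀ hf hf').differentiableOn ?_ hU
  filter_upwards [self_mem_nhdsWithin] with w hw
  simp only [slope_def_module]
  exact ((hhol w hw.1).sub (hhol w₀ hw₀)).const_smul _

end Slope

/-- The imaginary part is, up to a factor `-2`, the derivative of `‖f‖ ^ 2` along the circle. -/
theorem im_conj_mul_deriv_eq_zero_of_isMaxOn_sphere {f : ℂ → ℂ} {f' ζ : ℂ}
    (hf : HasDerivWithinAt f f' (sphere 0 ‖ζ‖) ζ) (hmax : IsMaxOn (norm ∘ f) (sphere 0 ‖ζ‖) ζ) :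
    (conj (f ζ) * (ζ * f')).im = 0 := by
  let γ : ℝ → ℂ := fun t ↦ ζ * Complex.exp (t * Complex.I)
  have hγ₀ : γ 0 = ζ := by simp [γ]
  have hγ_mem (t : ℝ) : γ t ∈ sphere 0 ‖ζ‖ := by simp [γ, Complex.norm_exp_ofReal_mul_I]
  have hγ : HasDerivAt γ (ζ * Complex.I) 0 := by
    simpa using ((Complex.ofRealCLM.hasDerivAt (x := 0)).mul_const Complex.I).cexp.const_mul ζ
  have hfγ : HasDerivAt (f ∘ γ) (ζ * Complex.I * f') 0 := by
    simpa only [smul_eq_mul] using hf.scomp_hasDerivAt_of_eq 0 hγ hγ_mem hγ₀.symm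
  have hmaxγ : IsLocalMax (fun t ↦ ‖(f ∘ γ) t‖ ^ 2) 0 := Eventually.of_forall fun t ↦ by
    have := hmax (hγ_mem t)
    simp only [Function.comp_apply, hγ₀]
    gcongr
    exact this
  have htangent : inner ℝ (f ζ) (ζ * Complex.I * f') = -(conj (f ζ) * (ζ * f')).im := by
    rw [Complex.inner, ← Complex.mul_I_re]
    ring_nf
  have hzero := hmaxγ.hasDerivAt_eq_zero hfγ.norm_sq
  rw [Function.comp_apply, hγ₀, htangent] at hzero
  linarith

section MaximumModulus

variable {E E' F : Type*} [NormedAddCommGroup E] [NormedSpace ℂ E] [NormedAddCommGroup E']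
  [NormedSpace ℂ E'] [NormedAddCommGroup F] [NormedSpace ℂ F] [StrictConvexSpace ℝ F]
  {f : E × E' → F} {s : Set E} {t : Set E'} {x₀ x : E} {y : E'}

theorem eq_of_isMaxOn_norm_prod (hs : IsOpen s) (hsc : IsPreconnected s)
    (hf : DifferentiableOn ℂ f (s ×ˢ t)) (hmax : IsMaxOn (norm ∘ f) (s ×ˢ t) (x₀, y))
    (hx₀ : x₀ ∈ s) (hy : y ∈ t) (hx : x ∈ s) : f (x, y) = f (x₀, y) :=
  Complex.eqOn_of_isPreconnected_of_isMaxOn_norm (f := fun x ↦ f (x, y)) hsc hs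
    (hf.comp (by fun_prop) fun _ hx ↦ ⟨hx, hy⟩) hx₀ (fun _ hx ↦ hmax ⟨hx, hy⟩) hx

theorem fderivWithin_fst_eq_zero_of_isMaxOn_norm_prod (hs : IsOpen s) (hsc : IsPreconnected s)
    (hf : DifferentiableOn ℂ f (s ×ˢ t)) (hmax : IsMaxOn (norm ∘ f) (s ×ˢ t) (x₀, y))
    (hx₀ : x₀ ∈ s) (hy : y ∈ t) (hx : x ∈ s) (v : E) :
    fderivWithin ℂ f (s ×ˢ t) (x, y) (v, 0) = 0 := by
  have hslice : HasFDerivWithinAt (fun x ↦ f (x, y))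
      (fderivWithin ℂ f (s ×ˢ t) (x, y) ∘L .inl ℂ E E') s x :=
    (hf (x, y) ⟨hx, hy⟩).hasFDerivWithinAt.comp x (hasFDerivAt_prodMk_left x y).hasFDerivWithinAt
      fun _ hx ↦ mk_mem_prod hx hy
  have hconst : HasFDerivWithinAt (fun x ↦ f (x, y)) (0 : E →L[ℂ] F) s x :=
    (hasFDerivWithinAt_const (f (x₀, y)) x s).congr'
      (fun _ hx ↦ eq_of_isMaxOn_norm_prod hs hsc hf hmax hx₀ hy hx) hx
  exact DFunLike.congr_fun ((hs.uniqueDiffWithinAt hx).eq hslice hconst) v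

end MaximumModulus

theorem differentiableOn_fderivWithin_snd {F : Type*} [NormedAddCommGroup F] [NormedSpace ℂ F]
    [CompleteSpace F] {φ : ℂ × ℂ → F} {U s : Set ℂ} {ζ : ℂ} (hU : IsOpen U) (hs : Convex ℝ s)
    (hsd : UniqueDiffOn ℂ s) (hφ : ContDiffOn ℂ 1 φ (U ×ˢ s)) (hζ : ζ ∈ s) :
    DifferentiableOn ℂ (fun z ↦ fderivWithin ℂ φ (U ×ˢ s) (z, ζ) (0, 1)) U := by
  have hd : DifferentiableOn ℂ φ (U ×ˢ s) := hφ.differentiableOn one_ne_zero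
  exact differentiableOn_partialDeriv_right (f := φ)
    (f' := fun p ↦ fderivWithin ℂ φ (U ×ˢ s) p (0, 1)) hU hs hζ
    (uniqueDiffWithinAt_iff_accPt.1 (hsd ζ hζ))
    (fun w hw ↦ hd.comp (by fun_prop) fun _ hz ↦ ⟨hz, hw⟩)
    (fun z hz w hw ↦ hasDerivWithinAt_comp_prodMk_right (hd (z, w) ⟨hz, hw⟩).hasFDerivWithinAt hz)
    ((hφ.continuousOn_fderivWithin (hU.uniqueDiffOn.prod hsd) le_rfl).clm_apply
      continuousOn_const)

theorem exists_fderivWithin_snd_eq_const_of_isMaxOn_norm_prod {U : Set ℂ} {φ : ℂ × ℂ → ℂ} {z₀ ζ : ℂ}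
    {r : ℝ} (hU : IsOpen U) (hUc : IsPreconnected U) (hr : 0 < r)
    (hφ : ContDiffOn ℂ 1 φ (U ×ˢ closedBall 0 r))
    (hmax : IsMaxOn (norm ∘ φ) (U ×ˢ closedBall 0 r) (z₀, ζ)) (hz₀ : z₀ ∈ U) (hζ : ‖ζ‖ = r)
    (hne : φ (z₀, ζ) ≠ 0) :
    ∃ c, ∀ z ∈ U, fderivWithin ℂ φ (U ×ˢ closedBall 0 r) (z, ζ) (0, 1) = c := by
  have hd : DifferentiableOn ℂ φ (U ×ˢ closedBall 0 r) := hφ.differentiableOn one_ne_zero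
  have hζ_mem : ζ ∈ closedBall (0 : ℂ) r := by simp [hζ]
  have hconst {z} (hz : z ∈ U) : φ (z, ζ) = φ (z₀, ζ) :=
    eq_of_isMaxOn_norm_prod hU hUc hd hmax hz₀ hζ_mem hz
  have hsphere : sphere (0 : ℂ) ‖ζ‖ ⊆ closedBall 0 r := hζ ▸ sphere_subset_closedBall
  have hreal (z) (hz : z ∈ U) : (conj (φ (z₀, ζ)) *
      (ζ * fderivWithin ℂ φ (U ×ˢ closedBall 0 r) (z, ζ) (0, 1))).im = 0 := by
    rw [← hconst hz]
    exact im_conj_mul_deriv_eq_zero_of_isMaxOn_sphere (f := fun w ↦ φ (z, w))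
      ((hasDerivWithinAt_comp_prodMk_right (hd (z, ζ) ⟨hz, hζ_mem⟩).hasFDerivWithinAt hz).mono
        hsphere)
      fun w hw ↦ by simpa [hconst hz] using hmax (mk_mem_prod hz (hsphere hw))
  have hhol := differentiableOn_fderivWithin_snd hU (convex_closedBall 0 r)
    (uniqueDiffOn_closedBall 0 hr) hφ hζ_mem
  obtain ⟨c, hc⟩ := (((hhol.const_mul ζ).const_mul _).analyticOnNhd hU).eq_const_of_im_eq_const
    hreal hU ⟨⟨z₀, hz₀⟩, hUc⟩
  refine ⟨fderivWithin ℂ φ (U ×ˢ closedBall 0 r) (z₀, ζ) (0, 1), fun z hz ↦ ?_⟩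
  exact mul_left_cancel₀ (norm_ne_zero_iff.1 (hζ ▸ hr.ne')) <|
    mul_left_cancel₀ ((map_ne_zero _).2 hne) ((hc z hz).trans (hc z₀ hz₀).symm)

theorem boundary_derivative_constancy_general {U : Set ℂ} (hU : IsOpen U) (hUc : IsPreconnected U)
    {φ : ℂ × ℂ → ℂ} (hhol : DifferentiableOn ℂ φ (U ×ˢ ball 0 1))
    (hsm : ContDiffOn ℝ 1 φ (U ×ˢ closedBall 0 1)) (hmap : ∀ p ∈ U ×ˢ ball 0 1, ‖φ p‖ ≤ 1)
    {z₀ ζ : ℂ} (hz₀ : z₀ ∈ U) (hζ : ‖ζ‖ = 1) (hφ : ‖φ (z₀, ζ)‖ = 1) :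
    (∀ z ∈ U, fderivWithin ℝ φ (U ×ˢ closedBall 0 1) (z, ζ) (1, 0) = 0) ∧
      ∃ c, ∀ z ∈ U, fderivWithin ℝ φ (U ×ˢ closedBall 0 1) (z, ζ) (0, 1) = c := by
  have hsub : U ×ˢ ball (0 : ℂ) 1 ⊆ U ×ˢ closedBall 0 1 := prod_mono_right ball_subset_closedBall
  have hdense : U ×ˢ closedBall (0 : ℂ) 1 ⊆ closure (U ×ˢ ball 0 1) := by
    rw [closure_prod_eq, closure_ball 0 one_ne_zero]
    exact prod_mono_left subset_closure
  have hud : UniqueDiffOn ℝ (U ×ˢ closedBall (0 : ℂ) 1) :=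
    hU.uniqueDiffOn.prod (uniqueDiffOn_closedBall 0 one_pos)
  have hsmC : ContDiffOn ℂ 1 φ (U ×ˢ closedBall 0 1) :=
    contDiffOn_one_extendScalars_of_subset_closure (hU.prod isOpen_ball) hsub hdense hud hsm hhol
  have hd := hsmC.differentiableOn one_ne_zero
  have hζ_mem : ζ ∈ closedBall (0 : ℂ) 1 := by simp [hζ]
  have hmax : IsMaxOn (norm ∘ φ) (U ×ˢ closedBall 0 1) (z₀, ζ) := fun p hp ↦
    (((hsm.continuousOn p hp).norm.mono hsub).closure_le (hdense hp) continuousWithinAt_const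
      hmap).trans_eq hφ.symm
  have hrestrict (z) (hz : z ∈ U) := (hd (z, ζ) ⟨hz, hζ_mem⟩).restrictScalars_fderivWithin ℝ
    (hud (z, ζ) ⟨hz, hζ_mem⟩)
  obtain ⟨c, hc⟩ := exists_fderivWithin_snd_eq_const_of_isMaxOn_norm_prod hU hUc one_pos hsmC hmax
    hz₀ hζ (norm_ne_zero_iff.1 (hφ ▸ one_ne_zero))
  refine ⟨fun z hz ↦ ?_, c, fun z hz ↦ ?_⟩
  · rw [← hrestrict z hz]
    exact fderivWithin_fst_eq_zero_of_isMaxOn_norm_prod hU hUc hd hmax hz₀ hζ_mem hz 1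
  · rw [← hrestrict z hz]
    exact hc z hz

theorem boundary_derivative_constancy (φ : ℂ × ℂ → ℂ)
    (hhol : DifferentiableOn ℂ φ (Metric.ball (0:ℂ) 1 ×ˢ Metric.ball (0:ℂ) 1))
    (hsm : ContDiffOn ℝ 1 φ (Metric.closedBall (0:ℂ) 1 ×ˢ Metric.closedBall (0:ℂ) 1))
    (hmap : ∀ p ∈ Metric.ball (0:ℂ) 1 ×ˢ Metric.ball (0:ℂ) 1, ‖φ p‖ < 1)
    (z₀ ζ : ℂ) (hz₀ : z₀ ∈ Metric.ball (0:ℂ) 1) (hζ : ‖ζ‖ = 1)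
    (hφ : ‖φ (z₀, ζ)‖ = 1) :
    (∀ z ∈ Metric.ball (0:ℂ) 1,
        fderivWithin ℝ φ (Metric.closedBall (0:ℂ) 1 ×ˢ Metric.closedBall (0:ℂ) 1)
          (z, ζ) (1, 0) = 0) ∧
      (∃ c : ℂ, ∀ z ∈ Metric.ball (0:ℂ) 1,
        fderivWithin ℝ φ (Metric.closedBall (0:ℂ) 1 ×ˢ Metric.closedBall (0:ℂ) 1)
          (z, ζ) (0, 1) = c) := by
  have hface (z) (hz : z ∈ ball (0 : ℂ) 1) :
      fderivWithin ℝ φ (closedBall 0 1 ×ˢ closedBall 0 1) (z, ζ) =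
        fderivWithin ℝ φ (ball 0 1 ×ˢ closedBall 0 1) (z, ζ) :=
    fderivWithin_prod_congr_set_left <| (eventuallyEq_univ.2 (closedBall_mem_nhds_of_mem hz)).trans
      (eventuallyEq_univ.2 (isOpen_ball.mem_nhds hz)).symm
  obtain ⟨hfst, c, hsnd⟩ := boundary_derivative_constancy_general isOpen_ball
    (convex_ball 0 1).isPreconnected hhol
    (hsm.mono (prod_mono_left ball_subset_closedBall)) (fun p hp ↦ (hmap p hp).le) hz₀ hζ hφ
  exact ⟨fun z hz ↦ hface z hz ▸ hfst z hz, c, fun z hz ↦ hface z hz ▸ hsnd z hz⟩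

end
end

section
/- There exists a constant C > 0 such that for every β ∈ (-1, 0], every a ∈ ℂ, and every δ ∈ (0,1): A_β(D(a, δ) ∩ 𝔻) ≤ C·δ^{β+2}, where D(a,δ) = {z ∈ ℂ : |z - a| < δ} and A_β is the measure (β+1)(1-|z|²)^β dA(z) on 𝔻. The constant C is independent of δ, β, and a. -/
open MeasureTheory Metric Set ENNReal

noncomputable section

/-- The weighted measure `A_β` on the unit disc:
`dA_β(z) = (β+1)(1-|z|²)^β dA(z)` where `dA` is normalized area measure. -/
def Abeta (β : ℝ) : Measure ℂ :=
  (volume.restrict (Metric.ball (0:ℂ) 1)).withDensity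
    (fun z => ENNReal.ofReal ((β + 1) * (1 - ‖z‖ ^ 2) ^ β / Real.pi))

/-!
On a ball of radius `r` in a `d`-dimensional space, `‖x - c‖ ^ β` with `-d < β ≤ 0` integrates to
at most a multiple of `r ^ (β + d)`, uniformly in `c` and in the center of the ball: outside
`ball c r` the integrand is at most `r ^ β`, and over `ball c r` the integral is explicit.

For a point `x + iy` of the unit disc and `s = √(1 - x²)`, one has
`1 - x² - y² = (s + |y|) (s - |y|)`, and if `x² ≤ 1/2` then the first factor is at least `1/2`.
So the weight is controlled by the `β`-th power of the distance `s - |y|` to the circle along the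
vertical line; if `x² > 1/2`, exchange `x` and `y`. Integrating this over the square of side `2δ`
around `a`, one line at a time, gives `δ ^ (β + 1)` from the one-dimensional estimate and another
factor `δ` from the transverse direction. The `1 / (β + 1)` produced by the one-dimensional
integral is cancelled by the normalization of `A_β`.
-/

lemma pow_pred_mul_rpow {n : ℕ} (hn : 0 < n) {y : ℝ} (hy : 0 < y) (β : ℝ) :
    y ^ (n - 1) * y ^ β = y ^ (β + n - 1) := by
  rw [← Real.rpow_natCast, ← Real.rpow_add hy, Nat.cast_pred hn]
  ring_nf

section AddHaar

open Module

variable {E : Type*} [NormedAddCommGroup E] [NormedSpace ℝ E] [FiniteDimensional ℝ E]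
  [Nontrivial E] [MeasurableSpace E] [BorelSpace E] (μ : Measure E) [μ.IsAddHaarMeasure]
  {β r : ℝ}

lemma integrableOn_ball_norm_rpow (hβ : -finrank ℝ E < β) (hr : 0 < r) :
    IntegrableOn (fun x : E => ‖x‖ ^ β) (ball 0 r) μ := by
  rw [integrableOn_fun_norm_addHaar μ (f := (· ^ β))]
  refine IntegrableOn.congr_fun
    ((intervalIntegral.integrableOn_Ioo_rpow_iff hr).2
      (by linarith : -1 < β + finrank ℝ E - 1)) (fun y hy => ?_) measurableSet_Ioo
  exact (pow_pred_mul_rpow finrank_pos hy.1 β).symm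

lemma integral_ball_norm_rpow (hβ : -finrank ℝ E < β) (hr : 0 ≤ r) :
    ∫ x in ball (0 : E) r, ‖x‖ ^ β ∂μ =
      finrank ℝ E / (β + finrank ℝ E) * μ.real (ball 0 1) * r ^ (β + finrank ℝ E) := by
  have radial (x : E) : (ball (0 : E) r).indicator (‖·‖ ^ β) x = (Iio r).indicator (· ^ β) ‖x‖ := by
    simp [indicator]
  have radial_integral :
      ∫ y in Ioi (0 : ℝ), y ^ (finrank ℝ E - 1) • (Iio r).indicator (· ^ β) y =
        r ^ (β + finrank ℝ E) / (β + finrank ℝ E) :=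
    calc
      _ = ∫ y in Ioi (0 : ℝ), (Iio r).indicator (· ^ (β + finrank ℝ E - 1)) y := by
        refine setIntegral_congr_fun measurableSet_Ioi fun y hy => ?_
        by_cases hyr : y < r <;> simp [hyr, pow_pred_mul_rpow finrank_pos hy]
      _ = ∫ y in (0 : ℝ)..r, y ^ (β + finrank ℝ E - 1) := by
        rw [setIntegral_indicator measurableSet_Iio, Ioi_inter_Iio, ← integral_Ioc_eq_integral_Ioo,
          intervalIntegral.integral_of_le hr]
      _ = r ^ (β + finrank ℝ E) / (β + finrank ℝ E) := by
        rw [integral_rpow (Or.inl (by linarith)), sub_add_cancel, Real.zero_rpow (by linarith),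
          sub_zero]
  rw [← integral_indicator measurableSet_ball]
  simp_rw [radial]
  rw [integral_fun_norm_addHaar μ, radial_integral, nsmul_eq_mul, smul_eq_mul]
  ring

lemma lintegral_ball_norm_sub_rpow (hβ : -finrank ℝ E < β) (hr : 0 < r) (c : E) :
    ∫⁻ x in ball c r, ENNReal.ofReal (‖x - c‖ ^ β) ∂μ =
      ENNReal.ofReal
        (finrank ℝ E / (β + finrank ℝ E) * μ.real (ball 0 1) * r ^ (β + finrank ℝ E)) := by
  have preimage_ball : (· - c) ⁻¹' ball (0 : E) r = ball c r := by
    ext x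
    simp [dist_eq_norm]
  rw [← preimage_ball, (measurePreserving_sub_right μ c).setLIntegral_comp_preimage_emb
      (measurableEmbedding_subRight c) (fun x => ENNReal.ofReal (‖x‖ ^ β)),
    ← ofReal_integral_eq_lintegral_ofReal (integrableOn_ball_norm_rpow μ hβ hr)
      (.of_forall fun x => by positivity),
    integral_ball_norm_rpow μ hβ hr.le]

lemma lintegral_ball_norm_sub_rpow_le (hβ : -finrank ℝ E < β) (hβ₀ : β ≤ 0) (hr : 0 < r)
    (u c : E) :
    ∫⁻ x in ball u r, ENNReal.ofReal (‖x - c‖ ^ β) ∂μ ≤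
      ENNReal.ofReal
        ((1 + finrank ℝ E / (β + finrank ℝ E)) * μ.real (ball 0 1) * r ^ (β + finrank ℝ E)) := by
  have hd : 0 < β + finrank ℝ E := by linarith
  have far : ∫⁻ x in ball u r \ ball c r, ENNReal.ofReal (‖x - c‖ ^ β) ∂μ ≤
      ENNReal.ofReal (μ.real (ball 0 1) * r ^ (β + finrank ℝ E)) :=
    calc
      _ ≤ ∫⁻ _ in ball u r \ ball c r, ENNReal.ofReal (r ^ β) ∂μ := by
        refine setLIntegral_mono measurable_const fun x hx => ENNReal.ofReal_le_ofReal ?_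
        exact Real.rpow_le_rpow_of_nonpos hr (by simpa [dist_eq_norm] using hx.2) hβ₀
      _ ≤ ENNReal.ofReal (r ^ β) * μ (ball u r) := by
        rw [setLIntegral_const]
        gcongr
        exact sdiff_subset
      _ = _ := by
        rw [μ.addHaar_ball_of_pos u hr, ← ofReal_measureReal,
          ← ENNReal.ofReal_mul (by positivity), ← ENNReal.ofReal_mul (by positivity),
          Real.rpow_add hr, Real.rpow_natCast]
        ring_nf
  calc
    _ ≤ (∫⁻ x in ball u r \ ball c r, ENNReal.ofReal (‖x - c‖ ^ β) ∂μ) +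
        ∫⁻ x in ball c r, ENNReal.ofReal (‖x - c‖ ^ β) ∂μ :=
      (lintegral_mono_set (subset_sdiff_union _ _)).trans (lintegral_union_le _ _ _)
    _ ≤ ENNReal.ofReal (μ.real (ball 0 1) * r ^ (β + finrank ℝ E)) + ENNReal.ofReal
          (finrank ℝ E / (β + finrank ℝ E) * μ.real (ball 0 1) * r ^ (β + finrank ℝ E)) :=
      add_le_add far (lintegral_ball_norm_sub_rpow μ hβ hr c).le
    _ = _ := by
      rw [← ENNReal.ofReal_add (by positivity) (by positivity)]
      ring_nf

end AddHaar

section Plane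

variable {β r : ℝ}

lemma abs_abs_sub_rpow_le (x c : ℝ) : |(|x| - c)| ^ β ≤ |x - c| ^ β + |x - -c| ^ β := by
  rcases abs_choice x with hx | hx <;> rw [hx]
  · exact le_add_of_nonneg_right (by positivity)
  · rw [← neg_add', abs_neg, ← sub_neg_eq_add]
    exact le_add_of_nonneg_left (by positivity)

lemma lintegral_ball_abs_sub_rpow_le (hβ : -1 < β) (hβ₀ : β ≤ 0) (hr : 0 < r) (u c : ℝ) :
    ∫⁻ x in ball u r, ENNReal.ofReal (|x - c| ^ β) ≤
      ENNReal.ofReal (4 / (β + 1) * r ^ (β + 1)) := by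
  have h := lintegral_ball_norm_sub_rpow_le volume (by simpa using hβ) hβ₀ hr u c
  simp only [Real.norm_eq_abs, Module.finrank_self, Nat.cast_one, Real.volume_real_ball zero_le_one,
    mul_one] at h
  refine h.trans (ENNReal.ofReal_le_ofReal ?_)
  have hβ₁ : 0 < β + 1 := by linarith
  gcongr
  rw [le_div_iff₀ hβ₁]
  field_simp
  linarith

lemma lintegral_ball_abs_abs_sub_rpow_le (hβ : -1 < β) (hβ₀ : β ≤ 0) (hr : 0 < r) (u c : ℝ) :
    ∫⁻ x in ball u r, ENNReal.ofReal (|(|x| - c)| ^ β) ≤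
      ENNReal.ofReal (8 / (β + 1) * r ^ (β + 1)) := by
  have hβ₁ : 0 < β + 1 := by linarith
  calc
    _ ≤ ∫⁻ x in ball u r, (ENNReal.ofReal (|x - c| ^ β) + ENNReal.ofReal (|x - -c| ^ β)) := by
      refine lintegral_mono fun x => ?_
      rw [← ENNReal.ofReal_add (by positivity) (by positivity)]
      exact ENNReal.ofReal_le_ofReal (abs_abs_sub_rpow_le x c)
    _ ≤ ENNReal.ofReal (4 / (β + 1) * r ^ (β + 1)) +
        ENNReal.ofReal (4 / (β + 1) * r ^ (β + 1)) := by
      rw [lintegral_add_left (by fun_prop)]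
      exact add_le_add (lintegral_ball_abs_sub_rpow_le hβ hβ₀ hr u c)
        (lintegral_ball_abs_sub_rpow_le hβ hβ₀ hr u (-c))
    _ = _ := by
      rw [← ENNReal.ofReal_add (by positivity) (by positivity)]
      ring_nf

/-- The distance from `p` to the unit circle along the vertical line through `p`; it is meaningful
only when that line meets the circle, that is, for `|p.1| ≤ 1`. -/
def verticalGap (p : ℝ × ℝ) : ℝ := |(|p.2| - √(1 - p.1 ^ 2))|

lemma verticalGap_nonneg (p : ℝ × ℝ) : 0 ≤ verticalGap p := abs_nonneg _

@[fun_prop]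
lemma measurable_verticalGap : Measurable verticalGap := by
  unfold verticalGap
  fun_prop

lemma lintegral_ball_verticalGap_rpow_le (hβ : -1 < β) (hβ₀ : β ≤ 0) (hr : 0 < r) (p : ℝ × ℝ) :
    ∫⁻ q in ball p r, ENNReal.ofReal (verticalGap q ^ β) ≤
      ENNReal.ofReal (16 / (β + 1) * r ^ (β + 2)) :=
  calc
    _ ≤ ∫⁻ x in ball p.1 r, ∫⁻ y in ball p.2 r, ENNReal.ofReal (verticalGap (x, y) ^ β) := by
      rw [← ball_prod_same, Measure.volume_eq_prod, ← Measure.prod_restrict]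
      exact lintegral_prod_le _
    _ ≤ ∫⁻ _ in ball p.1 r, ENNReal.ofReal (8 / (β + 1) * r ^ (β + 1)) :=
      lintegral_mono fun x => lintegral_ball_abs_abs_sub_rpow_le hβ hβ₀ hr p.2 (√(1 - x ^ 2))
    _ = _ := by
      have hβ₁ : 0 < β + 1 := by linarith
      rw [setLIntegral_const, Real.volume_ball, ← ENNReal.ofReal_mul (by positivity),
        show β + 2 = (β + 1) + 1 by ring, Real.rpow_add_one hr.ne' (β + 1)]
      congr 1
      ring

lemma lintegral_ball_comp_swap {X Y : Type*} [PseudoMetricSpace X] [PseudoMetricSpace Y]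
    [MeasureSpace X] [MeasureSpace Y] [SFinite (volume : Measure X)] [SFinite (volume : Measure Y)]
    (f : Y × X → ℝ≥0∞) (p : X × Y) (r : ℝ) :
    ∫⁻ q in ball p r, f q.swap = ∫⁻ q in ball p.swap r, f q := by
  have preimage_ball : Prod.swap ⁻¹' ball p.swap r = ball p r := by
    rw [← ball_prod_same, ← ball_prod_same, preimage_swap_prod]
    rfl
  rw [← preimage_ball]
  exact Measure.measurePreserving_swap.setLIntegral_comp_preimage_emb
    MeasurableEquiv.prodComm.measurableEmbedding f _

lemma one_sub_sq_add_sq_rpow_le_of_sq_le (hβ : -1 ≤ β) (hβ₀ : β ≤ 0) {p : ℝ × ℝ}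
    (hp : p.1 ^ 2 + p.2 ^ 2 < 1) (hp₁ : p.1 ^ 2 ≤ 1 / 2) :
    (1 - (p.1 ^ 2 + p.2 ^ 2)) ^ β ≤ 2 * verticalGap p ^ β := by
  set s := √(1 - p.1 ^ 2)
  have s_sq : s ^ 2 = 1 - p.1 ^ 2 := Real.sq_sqrt (by linarith)
  have half_le_s : 1 / 2 ≤ s := Real.le_sqrt_of_sq_le (by linarith)
  have abs_lt_s : |p.2| < s := abs_lt_of_sq_lt_sq (by linarith) (by linarith)
  have gap_eq : verticalGap p = s - |p.2| := by
    rw [verticalGap, abs_sub_comm, abs_of_pos (sub_pos.2 abs_lt_s)]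
  have gap_le : 1 / 2 * verticalGap p ≤ 1 - (p.1 ^ 2 + p.2 ^ 2) :=
    calc
      _ ≤ (s + |p.2|) * (s - |p.2|) := by
        rw [gap_eq]
        gcongr
        linarith [abs_nonneg p.2]
      _ = _ := by rw [← sq_sub_sq, s_sq, sq_abs]; ring
  calc
    _ ≤ (1 / 2 * verticalGap p) ^ β :=
      Real.rpow_le_rpow_of_nonpos (by linarith) gap_le hβ₀
    _ = (1 / 2) ^ β * verticalGap p ^ β := Real.mul_rpow (by norm_num) (verticalGap_nonneg p)
    _ ≤ (1 / 2) ^ (-1 : ℝ) * verticalGap p ^ β := by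
      gcongr ?_ * _
      · exact Real.rpow_nonneg (verticalGap_nonneg p) β
      · exact Real.rpow_le_rpow_of_exponent_ge (by norm_num) (by norm_num) hβ
    _ = 2 * verticalGap p ^ β := by norm_num [Real.rpow_neg_one]

lemma one_sub_sq_add_sq_rpow_le (hβ : -1 ≤ β) (hβ₀ : β ≤ 0) {p : ℝ × ℝ}
    (hp : p.1 ^ 2 + p.2 ^ 2 < 1) :
    (1 - (p.1 ^ 2 + p.2 ^ 2)) ^ β ≤ 2 * (verticalGap p ^ β + verticalGap p.swap ^ β) := by
  have gap_nonneg := Real.rpow_nonneg (verticalGap_nonneg p) β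
  have gap_swap_nonneg := Real.rpow_nonneg (verticalGap_nonneg p.swap) β
  rcases le_total (p.1 ^ 2) (1 / 2) with hp₁ | hp₁
  · linarith [one_sub_sq_add_sq_rpow_le_of_sq_le hβ hβ₀ hp hp₁]
  · have h := one_sub_sq_add_sq_rpow_le_of_sq_le (p := p.swap) hβ hβ₀
      (by rwa [add_comm] at hp) (by simp only [Prod.fst_swap]; linarith)
    rw [Prod.fst_swap, Prod.snd_swap, add_comm] at h
    linarith

lemma lintegral_ball_verticalGap_add_swap_rpow_le (hβ : -1 < β) (hβ₀ : β ≤ 0) (hr : 0 < r)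
    (p : ℝ × ℝ) :
    ∫⁻ q in ball p r, ENNReal.ofReal (2 * (verticalGap q ^ β + verticalGap q.swap ^ β)) ≤
      ENNReal.ofReal (64 / (β + 1) * r ^ (β + 2)) := by
  have hβ₁ : 0 < β + 1 := by linarith
  have gap_nonneg (q : ℝ × ℝ) : 0 ≤ verticalGap q ^ β := Real.rpow_nonneg (verticalGap_nonneg q) β
  calc
    _ = ENNReal.ofReal 2 * ((∫⁻ q in ball p r, ENNReal.ofReal (verticalGap q ^ β)) +
        ∫⁻ q in ball p.swap r, ENNReal.ofReal (verticalGap q ^ β)) := by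
      rw [← lintegral_ball_comp_swap (fun q => ENNReal.ofReal (verticalGap q ^ β)),
        ← lintegral_add_left (by fun_prop), ← lintegral_const_mul _ (by fun_prop)]
      simp_rw [ENNReal.ofReal_mul zero_le_two,
        ENNReal.ofReal_add (gap_nonneg _) (gap_nonneg _)]
    _ ≤ ENNReal.ofReal 2 * (ENNReal.ofReal (16 / (β + 1) * r ^ (β + 2)) +
        ENNReal.ofReal (16 / (β + 1) * r ^ (β + 2))) := by
      gcongr <;> exact lintegral_ball_verticalGap_rpow_le hβ hβ₀ hr _
    _ = _ := by
      rw [← ENNReal.ofReal_add (by positivity) (by positivity),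
        ← ENNReal.ofReal_mul zero_le_two]
      ring_nf

end Plane

lemma lintegral_ball_one_sub_norm_sq_rpow_le {β r : ℝ} (hβ : -1 < β) (hβ₀ : β ≤ 0) (hr : 0 < r)
    (a : ℂ) :
    ∫⁻ z in ball a r ∩ ball 0 1, ENNReal.ofReal ((1 - ‖z‖ ^ 2) ^ β) ≤
      ENNReal.ofReal (64 / (β + 1) * r ^ (β + 2)) := by
  let e := Complex.measurableEquivRealProd
  let F : ℝ × ℝ → ℝ≥0∞ :=
    fun q => ENNReal.ofReal (2 * (verticalGap q ^ β + verticalGap q.swap ^ β))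
  have density_le {z : ℂ} (hz : z ∈ ball (0 : ℂ) 1) :
      ENNReal.ofReal ((1 - ‖z‖ ^ 2) ^ β) ≤ F (e z) := by
    have norm_sq : ‖z‖ ^ 2 = (e z).1 ^ 2 + (e z).2 ^ 2 := by
      rw [Complex.sq_norm, Complex.normSq_apply, ← sq, ← sq]
      rfl
    have norm_sq_lt : ‖z‖ ^ 2 < 1 :=
      pow_lt_one₀ (norm_nonneg z) (mem_ball_zero_iff.1 hz) two_ne_zero
    rw [norm_sq] at norm_sq_lt ⊢
    exact ENNReal.ofReal_le_ofReal (one_sub_sq_add_sq_rpow_le hβ.le hβ₀ norm_sq_lt)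
  calc
    _ ≤ ∫⁻ z in ball a r ∩ ball 0 1, F (e z) :=
      setLIntegral_mono' (measurableSet_ball.inter measurableSet_ball) fun z hz => density_le hz.2
    _ ≤ ∫⁻ z in e ⁻¹' ball (e a) r, F (e z) := by
      refine lintegral_mono_set (inter_subset_left.trans fun z hz => ?_)
      exact (Complex.lipschitz_equivRealProd.dist_le_mul z a).trans_lt (by simpa using hz)
    _ = ∫⁻ q in ball (e a) r, F q :=
      Complex.volume_preserving_equiv_real_prod.setLIntegral_comp_preimage_emb
        e.measurableEmbedding F _
    _ ≤ _ := lintegral_ball_verticalGap_add_swap_rpow_le hβ hβ₀ hr (e a)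

lemma Abeta_apply {β : ℝ} (hβ : -1 ≤ β) {s : Set ℂ} (hs : MeasurableSet s) :
    Abeta β s = ENNReal.ofReal ((β + 1) / Real.pi) *
      ∫⁻ z in s ∩ ball 0 1, ENNReal.ofReal ((1 - ‖z‖ ^ 2) ^ β) := by
  have hβ₁ : 0 ≤ (β + 1) / Real.pi := div_nonneg (by linarith) Real.pi_nonneg
  rw [Abeta, withDensity_apply _ hs, Measure.restrict_restrict hs,
    ← lintegral_const_mul _ (by fun_prop)]
  simp_rw [← ENNReal.ofReal_mul hβ₁, div_mul_eq_mul_div]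

theorem disc_intersection_measure_bound_general {β δ : ℝ} (hβ : -1 < β) (hβ₀ : β ≤ 0)
    (hδ : 0 < δ) (a : ℂ) :
    Abeta β (ball a δ) ≤ ENNReal.ofReal (64 / Real.pi * δ ^ (β + 2)) := by
  have hβ₁ : 0 < β + 1 := by linarith
  calc
    _ ≤ ENNReal.ofReal ((β + 1) / Real.pi) * ENNReal.ofReal (64 / (β + 1) * δ ^ (β + 2)) := by
      rw [Abeta_apply hβ.le measurableSet_ball]
      gcongr
      exact lintegral_ball_one_sub_norm_sq_rpow_le hβ hβ₀ hδ a
    _ = _ := by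
      rw [← ENNReal.ofReal_mul (by positivity)]
      congr 1
      field_simp

theorem disc_intersection_measure_bound :
    ∃ C > (0:ℝ), ∀ β ∈ Set.Ioc (-1:ℝ) 0, ∀ a : ℂ, ∀ δ ∈ Set.Ioo (0:ℝ) 1,
      Abeta β (Metric.ball a δ ∩ Metric.ball 0 1) ≤ ENNReal.ofReal (C * δ ^ (β + 2)) :=
  ⟨64 / Real.pi, by positivity, fun _ hβ a _ hδ => (measure_mono inter_subset_left).trans
    (disc_intersection_measure_bound_general hβ.1 hβ.2 hδ.1 a)⟩

end
end
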